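/- Let p₀,p₁,p₂,p₃ ∈ ℝ³ span a simplex S with edge lengths y₁ = |p₀−p₁|, y₂ = |p₀−p₂|, y₃ = |p₀−p₃|, y₄ = |p₂−p₃|, y₅ = |p₁−p₃|, y₆ = |p₁−p₂| satisfying y₁ ∈ [2√2 − 0.001, 2√2] and yᵢ ∈ [2, 2.001] for i = 2,…,6 (i.e., all edge lengths lie within 0.001 of those of S₀ = S(2√2,2,2,2,2,2)). Then Γ(S) ≤ 0, with equality if and only if y₁ = 2√2 and y₂ = y₃ = y₄ = y₅ = y₆ = 2. -/

import Mathlib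

open MeasureTheory Real

noncomputable section

abbrev E3 : Type := EuclideanSpace ℝ (Fin 3)

/-- The density of the regular octahedron. -/
def δoct : ℝ := (-3 * π + 12 * arccos (1 / Real.sqrt 3)) / Real.sqrt 8

/-- The compression `Γ(S)` of the simplex `S = conv {p₀, p₁, p₂, p₃}`:
`Γ(S) = -δ_oct · vol S + vol (S ∩ (B(p₀,1) ∪ B(p₁,1) ∪ B(p₂,1) ∪ B(p₃,1)))`. -/
def Gamma (p₀ p₁ p₂ p₃ : E3) : ℝ :=
  -δoct * (volume (convexHull ℝ ({p₀, p₁, p₂, p₃} : Set E3))).toReal +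
    (volume (convexHull ℝ ({p₀, p₁, p₂, p₃} : Set E3) ∩
      (Metric.closedBall p₀ 1 ∪ Metric.closedBall p₁ 1 ∪ Metric.closedBall p₂ 1 ∪
        Metric.closedBall p₃ 1))).toReal

/-- coordinates map -/
def crd (x : E3) : (ℝ × ℝ) × ℝ := ((x 0, x 1), x 2)

lemma crd_mp : MeasurePreserving crd := by
  have h1 := PiLp.volume_preserving_ofLp (Fin 3)
  have h2 := volume_preserving_piFinSuccAbove (fun _ : Fin 3 => ℝ) 2
  have h3 := (volume_preserving_piFinTwo (fun _ : Fin 2 => ℝ))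
  have h4 : MeasurePreserving (Prod.swap : ℝ × (ℝ × ℝ) → (ℝ × ℝ) × ℝ) := Measure.measurePreserving_swap
  have h5 : MeasurePreserving (Prod.map id (MeasurableEquiv.piFinTwo (fun _ : Fin 2 => ℝ)) : ℝ × (Fin 2 → ℝ) → ℝ × (ℝ × ℝ)) :=
    (MeasurePreserving.id _).prod h3
  have := h4.comp (h5.comp (h2.comp h1))
  exact this

lemma sector_int (G : ℝ → ENNReal) (hG : Measurable G) (T : Set (ℝ × ℝ)) (J : Set ℝ)
    (hJ : MeasurableSet J) (hJs : J ⊆ Set.Ioo (-π) π)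
    (hT : ∀ r > 0, ∀ θ ∈ Set.Ioo (-π) π, ((r * cos θ, r * sin θ) ∈ T ↔ θ ∈ J)) :
    ∫⁻ p : ℝ × ℝ, T.indicator (fun p => G (p.1 ^ 2 + p.2 ^ 2)) p =
      volume J * ∫⁻ r in Set.Ioi (0 : ℝ), ENNReal.ofReal r * G (r ^ 2) := by
  rw [← lintegral_comp_polarCoord_symm]
  have : ∀ p ∈ polarCoord.target, ENNReal.ofReal p.1 • T.indicator (fun p => G (p.1 ^ 2 + p.2 ^ 2)) (polarCoord.symm p)
      = (ENNReal.ofReal p.1 * G (p.1 ^ 2)) * J.indicator 1 p.2 := by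
    rintro ⟨r, θ⟩ ⟨hr, hθ⟩
    simp only [polarCoord_symm_apply, smul_eq_mul]
    have := hT r hr θ hθ
    by_cases h : θ ∈ J
    · rw [Set.indicator_of_mem (this.2 h), Set.indicator_of_mem h]
      simp only [Pi.one_apply, mul_one]
      congr 2
      nlinarith [sin_sq_add_cos_sq θ]
    · rw [Set.indicator_of_notMem (fun hh => h (this.1 hh)), Set.indicator_of_notMem h]; simp
  rw [setLIntegral_congr_fun polarCoord.open_target.measurableSet this]
  rw [polarCoord_target, Measure.volume_eq_prod, ← Measure.prod_restrict,
    lintegral_prod_mul (f := fun r => ENNReal.ofReal r * G (r ^ 2)) (g := J.indicator 1)]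
  · rw [lintegral_indicator_one hJ, Measure.restrict_apply hJ, Set.inter_eq_left.2 hJs, mul_comm]
  · exact ((ENNReal.measurable_ofReal).mul (hG.comp (measurable_id.pow_const 2))).aemeasurable
  · exact (measurable_one.indicator hJ).aemeasurable

def Gz (s : ℝ) : ENNReal := volume {z : ℝ | s + z ^ 2 ≤ 1}

lemma Gz_meas : Measurable Gz := by
  have : MeasurableSet {q : ℝ × ℝ | q.1 + q.2 ^ 2 ≤ 1} :=
    measurableSet_le (by fun_prop) (by fun_prop)
  exact measurable_measure_prodMk_left this

lemma wedge_vol_T (T : Set (ℝ × ℝ)) (hTm : MeasurableSet T) (J : Set ℝ)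
    (hJ : MeasurableSet J) (hJs : J ⊆ Set.Ioo (-π) π)
    (hT : ∀ r > 0, ∀ θ ∈ Set.Ioo (-π) π, ((r * cos θ, r * sin θ) ∈ T ↔ θ ∈ J)) :
    volume {x : E3 | x 0 ^ 2 + x 1 ^ 2 + x 2 ^ 2 ≤ 1 ∧ (x 0, x 1) ∈ T} =
      volume J * ∫⁻ r in Set.Ioi (0 : ℝ), ENNReal.ofReal r * Gz (r ^ 2) := by
  rw [← sector_int Gz Gz_meas T J hJ hJs hT]
  have hm : MeasurableSet {q : (ℝ × ℝ) × ℝ | q.1.1 ^ 2 + q.1.2 ^ 2 + q.2 ^ 2 ≤ 1 ∧ q.1 ∈ T} :=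
    MeasurableSet.inter (s₁ := {q : (ℝ × ℝ) × ℝ | q.1.1 ^ 2 + q.1.2 ^ 2 + q.2 ^ 2 ≤ 1})
      (measurableSet_le (by fun_prop) (by fun_prop)) (measurable_fst hTm)
  have := crd_mp.measure_preimage hm.nullMeasurableSet
  have h2 : {x : E3 | x 0 ^ 2 + x 1 ^ 2 + x 2 ^ 2 ≤ 1 ∧ (x 0, x 1) ∈ T} =
    crd ⁻¹' {q : (ℝ × ℝ) × ℝ | q.1.1 ^ 2 + q.1.2 ^ 2 + q.2 ^ 2 ≤ 1 ∧ q.1 ∈ T} := rfl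
  rw [h2, this, Measure.volume_eq_prod, Measure.prod_apply hm]
  congr 1
  ext p
  by_cases h : p ∈ T
  · rw [Set.indicator_of_mem h]; simp [h, Gz]
  · rw [Set.indicator_of_notMem h]; simp [h]

lemma ball3_eq : Metric.closedBall (0 : E3) 1 = {x : E3 | x 0 ^ 2 + x 1 ^ 2 + x 2 ^ 2 ≤ 1} := by
  ext x
  simp only [mem_closedBall_zero_iff, EuclideanSpace.norm_eq, Fin.sum_univ_three, Real.norm_eq_abs, sq_abs, Set.mem_ofPred_eq]
  rw [Real.sqrt_le_iff]; simp

lemma C_val : ∫⁻ r in Set.Ioi (0 : ℝ), ENNReal.ofReal r * Gz (r ^ 2) = ENNReal.ofReal (2 / 3) := by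
  have h := wedge_vol_T Set.univ MeasurableSet.univ (Set.Ioo (-π) π) measurableSet_Ioo subset_rfl
    (fun r _ θ hθ => by simp [hθ.1, hθ.2])
  have hb := EuclideanSpace.volume_closedBall_fin_three (0 : E3) 1
  rw [ball3_eq] at hb
  simp only [Set.mem_univ, and_true] at h
  rw [hb, Real.volume_Ioo] at h
  have hp := pi_pos
  have e1 : ENNReal.ofReal 1 ^ 3 * ENNReal.ofReal (π * 4 / 3) = ENNReal.ofReal (π - -π) * ENNReal.ofReal (2/3) := by
    rw [← ENNReal.ofReal_mul (by linarith)]; simp; congr 1; ring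
  rw [e1] at h
  exact ((ENNReal.mul_right_inj (by simp; linarith) ENNReal.ofReal_ne_top).1 h).symm

lemma wedge_coord (φ : ℝ) (h0 : 0 ≤ φ) (h1 : φ < π) :
    volume {x : E3 | x 0 ^ 2 + x 1 ^ 2 + x 2 ^ 2 ≤ 1 ∧ 0 ≤ x 0 ∧ 0 ≤ x 0 * cos φ + x 1 * sin φ} =
      ENNReal.ofReal (2 / 3 * (π - φ)) := by
  have hp := pi_pos
  have h := wedge_vol_T {p | 0 ≤ p.1 ∧ 0 ≤ p.1 * cos φ + p.2 * sin φ}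
    (MeasurableSet.inter (s₁ := {p : ℝ × ℝ | 0 ≤ p.1})
      (s₂ := {p : ℝ × ℝ | 0 ≤ p.1 * cos φ + p.2 * sin φ})
      (measurableSet_le (by fun_prop) (by fun_prop)) (measurableSet_le (by fun_prop) (by fun_prop)))
    (Set.Icc (φ - π / 2) (π / 2)) measurableSet_Icc
    (fun θ hθ => ⟨by linarith [hθ.1], by linarith [hθ.2]⟩) (by
      rintro r hr θ ⟨ha, hb⟩
      have e : r * cos θ * cos φ + r * sin θ * sin φ = r * cos (θ - φ) := by rw [cos_sub]; ring
      simp only [Set.mem_ofPred_eq, e, mul_nonneg_iff_of_pos_left hr, Set.mem_Icc]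
      constructor
      · rintro ⟨u, v⟩
        have u1 : θ ≤ π / 2 := by
          by_contra hc
          push Not at hc
          exact absurd u (not_le.2 (cos_neg_of_pi_div_two_lt_of_lt hc (by linarith)))
        have u2 : -(π / 2) ≤ θ := by
          by_contra hc
          push Not at hc
          rw [← cos_neg] at u
          exact absurd u (not_le.2 (cos_neg_of_pi_div_two_lt_of_lt (by linarith) (by linarith)))
        refine ⟨?_, u1⟩
        by_contra hc
        push Not at hc
        rw [← cos_neg] at v
        exact absurd v (not_le.2 (cos_neg_of_pi_div_two_lt_of_lt (by linarith) (by linarith)))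
      · rintro ⟨u, v⟩
        exact ⟨cos_nonneg_of_mem_Icc ⟨by linarith, by linarith⟩, cos_nonneg_of_mem_Icc ⟨by linarith, by linarith⟩⟩)
  simp only [Set.mem_ofPred_eq] at h
  rw [h, C_val, Real.volume_Icc, ← ENNReal.ofReal_mul (by linarith)]
  congr 1; ring

open InnerProductGeometry in
lemma wedge_vol (n m : E3) (hn : n ≠ 0) (hm : m ≠ 0) (h0 : 0 < angle n m) (h1 : angle n m < π) :
    volume (Metric.closedBall (0 : E3) 1 ∩ {x : E3 | 0 ≤ inner ℝ n x ∧ 0 ≤ inner ℝ m x}) =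
      ENNReal.ofReal (2 / 3 * (π - angle n m)) := by
  set φ := angle n m with hφ
  have hs : 0 < sin φ := sin_pos_of_pos_of_lt_pi h0 h1
  have hn' : 0 < ‖n‖ := norm_pos_iff.2 hn
  have hm' : 0 < ‖m‖ := norm_pos_iff.2 hm
  have hc : inner ℝ n m = ‖n‖ * ‖m‖ * cos φ := by rw [hφ]; rw [← cos_angle_mul_norm_mul_norm]; ring
  have hc' : inner ℝ m n = ‖n‖ * ‖m‖ * cos φ := by rw [real_inner_comm]; exact hc
  have hnn : inner ℝ n n = ‖n‖ ^ 2 := real_inner_self_eq_norm_sq n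
  have hmm : inner ℝ m m = ‖m‖ ^ 2 := real_inner_self_eq_norm_sq m
  set u : E3 := ‖n‖⁻¹ • n with hu
  set v : E3 := (sin φ)⁻¹ • (‖m‖⁻¹ • m - cos φ • u) with hv
  have uu : inner ℝ u u = (1 : ℝ) := by
    simp only [hu, inner_smul_left, inner_smul_right, hnn]
    simp; field_simp
  have um : inner ℝ u m = ‖m‖ * cos φ := by
    simp only [hu, inner_smul_left, hc]
    simp; field_simp
  have mu : inner ℝ m u = ‖m‖ * cos φ := by rw [real_inner_comm]; exact um
  have uv : inner ℝ u v = (0 : ℝ) := by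
    simp only [hv, inner_smul_right, inner_sub_right, uu, um]
    field_simp; ring
  have vu : inner ℝ v u = (0 : ℝ) := by rw [real_inner_comm]; exact uv
  have vv : inner ℝ v v = (1 : ℝ) := by
    have : inner ℝ v v = (sin φ)⁻¹ * (‖m‖⁻¹ * inner ℝ m v - cos φ * inner ℝ u v) := by
      have : ∀ w : E3, inner ℝ v w = (sin φ)⁻¹ * (‖m‖⁻¹ * inner ℝ m w - cos φ * inner ℝ u w) := by
        intro w
        rw [hv]; simp only [inner_smul_left, inner_sub_left]; simp
      exact this v
    rw [this, uv]
    simp only [hv, inner_smul_right, inner_sub_right, mu, hmm]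
    field_simp
    nlinarith [sin_sq_add_cos_sq φ]
  have horth : Orthonormal ℝ (({0, 1} : Set (Fin 3)).domRestrict (![u, v, 0] : Fin 3 → E3)) := by
    rw [orthonormal_iff_ite]
    rintro ⟨i, hi⟩ ⟨j, hj⟩
    have hi' : i = 0 ∨ i = 1 := by simpa using hi
    have hj' : j = 0 ∨ j = 1 := by simpa using hj
    show inner ℝ ((![u, v, 0] : Fin 3 → E3) i) ((![u, v, 0] : Fin 3 → E3) j) = _
    rcases hi' with rfl | rfl <;> rcases hj' with rfl | rfl
    · simpa only [Matrix.cons_val_zero, if_true] using uu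
    · simpa using uv
    · simpa using vu
    · simpa only [Matrix.cons_val_one, Matrix.cons_val_zero, if_true] using vv
  obtain ⟨b, hb⟩ := horth.exists_orthonormalBasis_extension_of_card_eq (by simp)
  have b0 : b 0 = u := by rw [hb 0 (by simp)]; rfl
  have b1 : b 1 = v := by rw [hb 1 (by simp)]; rfl
  have key := b.measurePreserving_repr
  have hms : MeasurableSet {x : E3 | x 0 ^ 2 + x 1 ^ 2 + x 2 ^ 2 ≤ 1 ∧ 0 ≤ x 0 ∧ 0 ≤ x 0 * cos φ + x 1 * sin φ} := by
    apply IsClosed.measurableSet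
    refine IsClosed.inter (s₁ := {x : E3 | x 0 ^ 2 + x 1 ^ 2 + x 2 ^ 2 ≤ 1}) (s₂ := {x : E3 | 0 ≤ x 0 ∧ 0 ≤ x 0 * cos φ + x 1 * sin φ}) (isClosed_le (by fun_prop) (by fun_prop)) ?_
    exact IsClosed.inter (s₁ := {x : E3 | 0 ≤ x 0 }) (s₂ := {x : E3 | 0 ≤ x 0 * cos φ + x 1 * sin φ}) (isClosed_le (by fun_prop) (by fun_prop)) (isClosed_le (by fun_prop) (by fun_prop))
  have := key.measure_preimage hms.nullMeasurableSet
  rw [wedge_coord φ h0.le h1] at this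
  rw [← this]
  congr 1
  ext x
  have e1 : x ∈ Metric.closedBall (0 : E3) 1 ↔ b.repr x ∈ Metric.closedBall (0 : E3) 1 := by
    simp
  have i0 : b.repr x 0 = inner ℝ u x := by rw [b.repr_apply_apply, b0]
  have i1 : b.repr x 1 = inner ℝ v x := by rw [b.repr_apply_apply, b1]
  have en : inner ℝ n x = ‖n‖ * b.repr x 0 := by
    rw [i0]; simp only [hu, inner_smul_left]; simp; field_simp
  have em : inner ℝ m x = ‖m‖ * (b.repr x 0 * cos φ + b.repr x 1 * sin φ) := by
    rw [i0, i1]; simp only [hv, inner_smul_left, inner_sub_left]; simp; field_simp; ring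
  rw [Set.mem_inter_iff, e1, ball3_eq]
  simp only [Set.mem_ofPred_eq, Set.mem_preimage, en, em, mul_nonneg_iff_of_pos_left hn', mul_nonneg_iff_of_pos_left hm']

lemma half_null (n : E3) (hn : n ≠ 0) : volume {x : E3 | inner ℝ n x = 0} = 0 := by
  have h := Measure.addHaar_submodule (volume : Measure E3) (LinearMap.ker (innerSL ℝ n).toLinearMap) (by
    intro h
    have : n ∈ (⊤ : Submodule ℝ E3) := trivial
    rw [← h] at this
    simp at this
    exact hn this)
  convert h using 2
  ext x; simp

/-- Girard's formula, in terms of face normals -/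
lemma girard (n₁ n₂ n₃ : E3) (W₁₂ W₁₃ W₂₃ : ℝ) (hn : n₁ ≠ 0) (hn2 : n₂ ≠ 0) (hn3 : n₃ ≠ 0)
    (h12 : volume.real (Metric.closedBall (0 : E3) 1 ∩ {x : E3 | 0 ≤ inner ℝ n₁ x ∧ 0 ≤ inner ℝ n₂ x}) = W₁₂)
    (h13 : volume.real (Metric.closedBall (0 : E3) 1 ∩ {x : E3 | 0 ≤ inner ℝ n₁ x ∧ 0 ≤ inner ℝ n₃ x}) = W₁₃)
    (h23 : volume.real (Metric.closedBall (0 : E3) 1 ∩ {x : E3 | 0 ≤ inner ℝ n₂ x ∧ 0 ≤ inner ℝ n₃ x}) = W₂₃) :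
    volume.real (Metric.closedBall (0 : E3) 1 ∩ {x : E3 | 0 ≤ inner ℝ n₁ x ∧ 0 ≤ inner ℝ n₂ x ∧ 0 ≤ inner ℝ n₃ x}) =
      (W₁₂ + W₁₃ + W₂₃ - 2 * π / 3) / 2 := by
  set B := Metric.closedBall (0 : E3) 1 with hB
  have hBf : volume B ≠ ⊤ := (isCompact_closedBall (0 : E3) 1).measure_lt_top.ne
  have hBv : volume.real B = 4 * π / 3 := by
    rw [hB, Measure.real, EuclideanSpace.volume_closedBall_fin_three]
    simp; rw [ENNReal.toReal_ofReal (by positivity)]; ring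
  let H : E3 → Set E3 := fun n => {x : E3 | 0 ≤ inner ℝ n x}
  have Hm : ∀ n, MeasurableSet (H n) := fun n => (isClosed_le (by fun_prop) (by fun_prop)).measurableSet
  have Bm : MeasurableSet B := Metric.isClosed_closedBall.measurableSet
  -- split by third half space
  have split : ∀ (A : Set E3) (n : E3), A ⊆ B → volume.real (A ∩ H n) + volume.real (A \ H n) = volume.real A :=
    fun A n hA => measureReal_inter_add_sdiff (Hm n) (ne_top_of_le_ne_top hBf (measure_mono hA))
  have neg : ∀ A : Set E3, volume.real (-A) = volume.real A := fun A => by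
    rw [Measure.real, Measure.measure_neg]; rfl
  have hf : ∀ A : Set E3, A ⊆ B → volume A ≠ ⊤ := fun A hA => ne_top_of_le_ne_top hBf (measure_mono hA)
  -- ae equality
  have aeH : ∀ n : E3, n ≠ 0 → ∀ᵐ x : E3, inner ℝ n x ≠ 0 := fun n hn => by
    rw [ae_iff]; simpa using half_null n hn
  have congrA : ∀ A A' : Set E3, (∀ x, inner ℝ n₁ x ≠ 0 → inner ℝ n₂ x ≠ 0 → inner ℝ n₃ x ≠ 0 → (x ∈ A ↔ x ∈ A')) →
      volume.real A = volume.real A' := by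
    intro A A' h
    apply measureReal_congr
    filter_upwards [aeH _ hn, aeH _ hn2, aeH _ hn3] with x a b c
    exact propext (h x a b c)
  have memH : ∀ n x, x ∈ H n ↔ 0 ≤ inner ℝ n x := fun n x => Iff.rfl
  have negB : ∀ x, -x ∈ B ↔ x ∈ B := by simp [hB]
  have half : volume.real (B ∩ H n₁) = 2 * π / 3 := by
    have := split B n₁ subset_rfl
    have e : volume.real (B \ H n₁) = volume.real (B ∩ H n₁) := by
      rw [← neg (B ∩ H n₁)]
      apply congrA
      intro x a _ _
      simp only [Set.mem_sdiff, Set.mem_neg, Set.mem_inter_iff, memH, negB, inner_neg_right, not_le, Left.nonneg_neg_iff]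
      exact and_congr_right fun _ => ⟨fun h => h.le, fun h => lt_of_le_of_ne h a⟩
    rw [e, hBv] at this
    linarith
  have s12 := split (B ∩ H n₁ ∩ H n₂) n₃ (fun x hx => hx.1.1)
  have s13 := split (B ∩ H n₁ ∩ H n₃) n₂ (fun x hx => hx.1.1)
  have s23 := split (B ∩ H n₂ ∩ H n₃) n₁ (fun x hx => hx.1.1)
  have t1 := split (B ∩ H n₁) n₂ (fun x hx => hx.1)
  have t2 := split ((B ∩ H n₁) \ H n₂) n₃ (fun x hx => hx.1.1)
  have r12 : W₁₂ = volume.real (B ∩ H n₁ ∩ H n₂) := by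
    rw [← h12, Set.inter_assoc]; rfl
  have r13 : W₁₃ = volume.real (B ∩ H n₁ ∩ H n₃) := by
    rw [← h13, Set.inter_assoc]; rfl
  have r23 : W₂₃ = volume.real (B ∩ H n₂ ∩ H n₃) := by
    rw [← h23, Set.inter_assoc]; rfl
  have e1 : volume.real (B ∩ H n₁ ∩ H n₃ ∩ H n₂) = volume.real (B ∩ H n₁ ∩ H n₂ ∩ H n₃) := by
    congr 1; ext x; simp; tauto
  have e2 : volume.real (B ∩ H n₂ ∩ H n₃ ∩ H n₁) = volume.real (B ∩ H n₁ ∩ H n₂ ∩ H n₃) := by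
    congr 1; ext x; simp; tauto
  have e3 : volume.real (((B ∩ H n₁) \ H n₂) ∩ H n₃) = volume.real ((B ∩ H n₁ ∩ H n₃) \ H n₂) := by
    congr 1; ext x; simp; tauto
  have e4 : volume.real (((B ∩ H n₁) \ H n₂) \ H n₃) = volume.real ((B ∩ H n₂ ∩ H n₃) \ H n₁) := by
    rw [← neg ((B ∩ H n₂ ∩ H n₃) \ H n₁)]
    apply congrA
    intro x a b c
    simp only [Set.mem_sdiff, Set.mem_neg, Set.mem_inter_iff, memH, negB, inner_neg_right, not_le, Left.nonneg_neg_iff]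
    constructor
    · rintro ⟨⟨⟨u, v⟩, w⟩, z⟩
      exact ⟨⟨⟨u, w.le⟩, z.le⟩, lt_of_le_of_ne v a.symm⟩
    · rintro ⟨⟨⟨u, v⟩, w⟩, z⟩
      exact ⟨⟨⟨u, z.le⟩, lt_of_le_of_ne v b⟩, lt_of_le_of_ne w c⟩
  have e5 : volume.real (B ∩ {x : E3 | 0 ≤ inner ℝ n₁ x ∧ 0 ≤ inner ℝ n₂ x ∧ 0 ≤ inner ℝ n₃ x}) = volume.real (B ∩ H n₁ ∩ H n₂ ∩ H n₃) := by
    congr 1; ext x; simp [memH]; tauto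
  rw [e5]
  linarith

lemma lint_pow (t : ℝ) (ht : 0 ≤ t) (n : ℕ) :
    ∫⁻ a in Set.Icc 0 t, ENNReal.ofReal ((t - a) ^ n) = ENNReal.ofReal (t ^ (n + 1) / (n + 1)) := by
  rw [← ofReal_integral_eq_lintegral_ofReal]
  · congr 1
    rw [integral_Icc_eq_integral_Ioc, ← intervalIntegral.integral_of_le ht,
      intervalIntegral.integral_comp_sub_left (fun x => x ^ n) t]
    simp
  · exact ContinuousOn.integrableOn_Icc (by fun_prop)
  · rw [Filter.EventuallyLE, ae_restrict_iff' measurableSet_Icc]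
    exact Filter.Eventually.of_forall fun a ha => pow_nonneg (by linarith [ha.2]) n

lemma tri_area (t : ℝ) (ht : 0 ≤ t) :
    volume {p : ℝ × ℝ | 0 ≤ p.1 ∧ 0 ≤ p.2 ∧ p.1 + p.2 ≤ t} = ENNReal.ofReal (t ^ 2 / 2) := by
  have hm : MeasurableSet {p : ℝ × ℝ | 0 ≤ p.1 ∧ 0 ≤ p.2 ∧ p.1 + p.2 ≤ t} := by
    apply IsClosed.measurableSet
    exact IsClosed.inter (s₁ := {p : ℝ × ℝ | 0 ≤ p.1}) (s₂ := {p : ℝ × ℝ | 0 ≤ p.2 ∧ p.1 + p.2 ≤ t})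
      (isClosed_le (by fun_prop) (by fun_prop))
      (IsClosed.inter (s₁ := {p : ℝ × ℝ | 0 ≤ p.2}) (s₂ := {p : ℝ × ℝ | p.1 + p.2 ≤ t})
      (isClosed_le (by fun_prop) (by fun_prop)) (isClosed_le (by fun_prop) (by fun_prop)))
  have h := lint_pow t ht 1
  rw [Measure.volume_eq_prod, Measure.prod_apply hm]
  have : ∀ a : ℝ, volume (Prod.mk a ⁻¹' {p : ℝ × ℝ | 0 ≤ p.1 ∧ 0 ≤ p.2 ∧ p.1 + p.2 ≤ t}) =
      (Set.Icc 0 t).indicator (fun a => ENNReal.ofReal ((t - a) ^ 1)) a := by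
    intro a
    by_cases ha : a ∈ Set.Icc 0 t
    · rw [Set.indicator_of_mem ha]
      have : (Prod.mk a ⁻¹' {p : ℝ × ℝ | 0 ≤ p.1 ∧ 0 ≤ p.2 ∧ p.1 + p.2 ≤ t}) = Set.Icc 0 (t - a) := by
        ext b; simp [ha.1]; intro _; constructor <;> intro h <;> linarith
      rw [this, Real.volume_Icc]; simp
    · rw [Set.indicator_of_notMem ha]
      have : (Prod.mk a ⁻¹' {p : ℝ × ℝ | 0 ≤ p.1 ∧ 0 ≤ p.2 ∧ p.1 + p.2 ≤ t}) = ∅ := by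
        ext b; simp; intro h0 h1; by_contra hc; push Not at hc; exact ha ⟨h0, by linarith⟩
      rw [this]; simp
  simp_rw [this]
  rw [lintegral_indicator measurableSet_Icc, h]
  congr 1; norm_num

def stdT : Set E3 := {x : E3 | 0 ≤ x 0 ∧ 0 ≤ x 1 ∧ 0 ≤ x 2 ∧ x 0 + x 1 + x 2 ≤ 1}

lemma stdT_vol : volume stdT = ENNReal.ofReal (1 / 6) := by
  have hm : MeasurableSet {q : (ℝ × ℝ) × ℝ | 0 ≤ q.1.1 ∧ 0 ≤ q.1.2 ∧ 0 ≤ q.2 ∧ q.1.1 + q.1.2 + q.2 ≤ 1} := by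
    apply IsClosed.measurableSet
    exact IsClosed.inter (s₁ := {p : (ℝ × ℝ) × ℝ | 0 ≤ p.1.1}) (s₂ := {q : (ℝ × ℝ) × ℝ | 0 ≤ q.1.2 ∧ 0 ≤ q.2 ∧ q.1.1 + q.1.2 + q.2 ≤ 1})
      (isClosed_le (by fun_prop) (by fun_prop))
      (IsClosed.inter (s₁ := {p : (ℝ × ℝ) × ℝ | 0 ≤ p.1.2}) (s₂ := {q : (ℝ × ℝ) × ℝ | 0 ≤ q.2 ∧ q.1.1 + q.1.2 + q.2 ≤ 1})
      (isClosed_le (by fun_prop) (by fun_prop))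
      (IsClosed.inter (s₁ := {p : (ℝ × ℝ) × ℝ | 0 ≤ p.2}) (s₂ := {q : (ℝ × ℝ) × ℝ | q.1.1 + q.1.2 + q.2 ≤ 1})
       (isClosed_le (by fun_prop) (by fun_prop)) (isClosed_le (by fun_prop) (by fun_prop))))
  have := crd_mp.measure_preimage hm.nullMeasurableSet
  have h2 : stdT = crd ⁻¹' {q : (ℝ × ℝ) × ℝ | 0 ≤ q.1.1 ∧ 0 ≤ q.1.2 ∧ 0 ≤ q.2 ∧ q.1.1 + q.1.2 + q.2 ≤ 1} := rfl
  rw [h2, this, Measure.volume_eq_prod, Measure.prod_apply_symm hm]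
  have h := lint_pow 1 zero_le_one 2
  have : ∀ z : ℝ, volume ((fun p => Prod.mk p z) ⁻¹' {q : (ℝ × ℝ) × ℝ | 0 ≤ q.1.1 ∧ 0 ≤ q.1.2 ∧ 0 ≤ q.2 ∧ q.1.1 + q.1.2 + q.2 ≤ 1}) =
      (Set.Icc 0 1).indicator (fun z => ENNReal.ofReal (1 / 2) * ENNReal.ofReal ((1 - z) ^ 2)) z := by
    intro z
    by_cases hz : z ∈ Set.Icc (0 : ℝ) 1
    · rw [Set.indicator_of_mem hz, ← ENNReal.ofReal_mul (by norm_num)]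
      have : ((fun p => Prod.mk p z) ⁻¹' {q : (ℝ × ℝ) × ℝ | 0 ≤ q.1.1 ∧ 0 ≤ q.1.2 ∧ 0 ≤ q.2 ∧ q.1.1 + q.1.2 + q.2 ≤ 1}) =
          {p : ℝ × ℝ | 0 ≤ p.1 ∧ 0 ≤ p.2 ∧ p.1 + p.2 ≤ 1 - z} := by
        ext b; simp [hz.1]; intro _ _; constructor <;> intro h <;> linarith
      rw [this, tri_area _ (by linarith [hz.2])]; congr 1; ring
    · rw [Set.indicator_of_notMem hz]
      have : ((fun p => Prod.mk p z) ⁻¹' {q : (ℝ × ℝ) × ℝ | 0 ≤ q.1.1 ∧ 0 ≤ q.1.2 ∧ 0 ≤ q.2 ∧ q.1.1 + q.1.2 + q.2 ≤ 1}) = ∅ := by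
        ext b; simp; intro h0 h1 h2; by_contra hc; push Not at hc; exact hz ⟨h2, by linarith⟩
      rw [this]; simp
  simp_rw [this]
  rw [lintegral_indicator measurableSet_Icc, lintegral_const_mul _ (by fun_prop), h, ← ENNReal.ofReal_mul (by norm_num)]
  congr 1; norm_num

/-- cross product -/
def cr (a b : E3) : E3 := !₂[a 1 * b 2 - a 2 * b 1, a 2 * b 0 - a 0 * b 2, a 0 * b 1 - a 1 * b 0]

lemma inner3 (a b : E3) : inner ℝ a b = a 0 * b 0 + a 1 * b 1 + a 2 * b 2 := by
  simp [PiLp.inner_apply, Fin.sum_univ_three]; ring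

/-- dual basis of a basis -/
structure Dual (v₁ v₂ v₃ m₁ m₂ m₃ : E3) (D : ℝ) : Prop where
  hD : 0 < D
  h11 : inner ℝ m₁ v₁ = (1 : ℝ)
  h12 : inner ℝ m₁ v₂ = (0 : ℝ)
  h13 : inner ℝ m₁ v₃ = (0 : ℝ)
  h21 : inner ℝ m₂ v₁ = (0 : ℝ)
  h22 : inner ℝ m₂ v₂ = (1 : ℝ)
  h23 : inner ℝ m₂ v₃ = (0 : ℝ)
  h31 : inner ℝ m₃ v₁ = (0 : ℝ)
  h32 : inner ℝ m₃ v₂ = (0 : ℝ)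
  h33 : inner ℝ m₃ v₃ = (1 : ℝ)
  expand : ∀ w : E3, w = inner ℝ m₁ w • v₁ + inner ℝ m₂ w • v₂ + inner ℝ m₃ w • v₃
  g11 : D ^ 2 * inner ℝ m₁ m₁ = inner ℝ v₂ v₂ * inner ℝ v₃ v₃ - inner ℝ v₂ v₃ ^ 2
  g22 : D ^ 2 * inner ℝ m₂ m₂ = inner ℝ v₁ v₁ * inner ℝ v₃ v₃ - inner ℝ v₁ v₃ ^ 2
  g33 : D ^ 2 * inner ℝ m₃ m₃ = inner ℝ v₁ v₁ * inner ℝ v₂ v₂ - inner ℝ v₁ v₂ ^ 2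
  g12 : D ^ 2 * inner ℝ m₁ m₂ = inner ℝ v₂ v₃ * inner ℝ v₁ v₃ - inner ℝ v₁ v₂ * inner ℝ v₃ v₃
  g13 : D ^ 2 * inner ℝ m₁ m₃ = inner ℝ v₂ v₃ * inner ℝ v₁ v₂ - inner ℝ v₁ v₃ * inner ℝ v₂ v₂
  g23 : D ^ 2 * inner ℝ m₂ m₃ = inner ℝ v₁ v₃ * inner ℝ v₁ v₂ - inner ℝ v₂ v₃ * inner ℝ v₁ v₁
  det : D ^ 2 = inner ℝ v₁ v₁ * inner ℝ v₂ v₂ * inner ℝ v₃ v₃ + 2 * inner ℝ v₁ v₂ * inner ℝ v₁ v₃ * inner ℝ v₂ v₃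
     - inner ℝ v₁ v₁ * inner ℝ v₂ v₃ ^ 2 - inner ℝ v₂ v₂ * inner ℝ v₁ v₃ ^ 2 - inner ℝ v₃ v₃ * inner ℝ v₁ v₂ ^ 2
  vol : volume {x : E3 | 0 ≤ inner ℝ m₁ x ∧ 0 ≤ inner ℝ m₂ x ∧ 0 ≤ inner ℝ m₃ x ∧ inner ℝ m₁ x + inner ℝ m₂ x + inner ℝ m₃ x ≤ (1 : ℝ)}
     = ENNReal.ofReal (D / 6)

set_option maxHeartbeats 1000000 in
lemma exists_dual (v₁ v₂ v₃ : E3) (h : 0 < inner ℝ v₁ v₁ * inner ℝ v₂ v₂ * inner ℝ v₃ v₃ + 2 * inner ℝ v₁ v₂ * inner ℝ v₁ v₃ * inner ℝ v₂ v₃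
     - inner ℝ v₁ v₁ * inner ℝ v₂ v₃ ^ 2 - inner ℝ v₂ v₂ * inner ℝ v₁ v₃ ^ 2 - inner ℝ v₃ v₃ * inner ℝ v₁ v₂ ^ 2) :
    ∃ m₁ m₂ m₃ D, Dual v₁ v₂ v₃ m₁ m₂ m₃ D := by
  set d : ℝ := inner ℝ v₁ (cr v₂ v₃) with hd
  have hd3 : d = v₁ 0 * (v₂ 1 * v₃ 2 - v₂ 2 * v₃ 1) + v₁ 1 * (v₂ 2 * v₃ 0 - v₂ 0 * v₃ 2) + v₁ 2 * (v₂ 0 * v₃ 1 - v₂ 1 * v₃ 0) := by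
    rw [hd, inner3]; simp [cr]
  have hdet : d ^ 2 = inner ℝ v₁ v₁ * inner ℝ v₂ v₂ * inner ℝ v₃ v₃ + 2 * inner ℝ v₁ v₂ * inner ℝ v₁ v₃ * inner ℝ v₂ v₃
     - inner ℝ v₁ v₁ * inner ℝ v₂ v₃ ^ 2 - inner ℝ v₂ v₂ * inner ℝ v₁ v₃ ^ 2 - inner ℝ v₃ v₃ * inner ℝ v₁ v₂ ^ 2 := by
    rw [hd3]; simp only [inner3]; ring
  have hd0 : d ≠ 0 := by intro h0; rw [← hdet, h0] at h; norm_num at h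
  have sc : ∀ a b x : E3, inner ℝ (d⁻¹ • cr a b) x = d⁻¹ * ((a 1 * b 2 - a 2 * b 1) * x 0 + (a 2 * b 0 - a 0 * b 2) * x 1 + (a 0 * b 1 - a 1 * b 0) * x 2) := by
    intro a b x
    rw [inner_smul_left, inner3]; simp [cr]
  have sc2 : ∀ a b e f : E3, |d| ^ 2 * inner ℝ (d⁻¹ • cr a b) (d⁻¹ • cr e f) =
      inner ℝ a e * inner ℝ b f - inner ℝ a f * inner ℝ b e := by
    intro a b e f
    rw [inner_smul_left, inner_smul_right, sq_abs]
    have : inner ℝ (cr a b) (cr e f) = inner ℝ a e * inner ℝ b f - inner ℝ a f * inner ℝ b e := by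
      simp only [inner3]; simp [cr]; ring
    rw [this]; simp; field_simp
  refine ⟨d⁻¹ • cr v₂ v₃, d⁻¹ • cr v₃ v₁, d⁻¹ • cr v₁ v₂, |d|, ?_⟩
  refine ⟨abs_pos.2 hd0, ?_, ?_, ?_, ?_, ?_, ?_, ?_, ?_, ?_, ?_, ?_, ?_, ?_, ?_, ?_, ?_, ?_, ?_⟩
  · rw [sc, inv_mul_eq_iff_eq_mul₀ hd0, hd3]; ring
  · rw [sc, inv_mul_eq_iff_eq_mul₀ hd0]; ring
  · rw [sc, inv_mul_eq_iff_eq_mul₀ hd0]; ring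
  · rw [sc, inv_mul_eq_iff_eq_mul₀ hd0]; ring
  · rw [sc, inv_mul_eq_iff_eq_mul₀ hd0, hd3]; ring
  · rw [sc, inv_mul_eq_iff_eq_mul₀ hd0]; ring
  · rw [sc, inv_mul_eq_iff_eq_mul₀ hd0]; ring
  · rw [sc, inv_mul_eq_iff_eq_mul₀ hd0]; ring
  · rw [sc, inv_mul_eq_iff_eq_mul₀ hd0, hd3]; ring
  · intro w
    have key : d • w = (d * inner ℝ (d⁻¹ • cr v₂ v₃) w) • v₁ + (d * inner ℝ (d⁻¹ • cr v₃ v₁) w) • v₂ + (d * inner ℝ (d⁻¹ • cr v₁ v₂) w) • v₃ := by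
      simp only [sc, mul_inv_cancel_left₀ hd0]
      ext i
      fin_cases i
      · simp; rw [hd3]; ring
      · simp; rw [hd3]; ring
      · simp; rw [hd3]; ring
    simp only [mul_smul] at key
    rw [← smul_add, ← smul_add] at key
    exact smul_right_injective E3 hd0 key
  · rw [sc2]; rw [real_inner_comm v₂ v₃]; ring
  · rw [sc2]; rw [real_inner_comm v₁ v₃]; ring
  · rw [sc2]; rw [real_inner_comm v₁ v₂]; ring
  · rw [sc2, real_inner_comm v₁ v₃, real_inner_comm v₁ v₂]
  · rw [sc2, real_inner_comm v₁ v₂, real_inner_comm v₁ v₃, real_inner_comm v₂ v₃]; ring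
  · rw [sc2, real_inner_comm v₁ v₃, real_inner_comm v₂ v₃]
  · rw [sq_abs]; exact hdet
  · let A : Matrix (Fin 3) (Fin 3) ℝ := Matrix.of ![(d⁻¹ • cr v₂ v₃).ofLp, (d⁻¹ • cr v₃ v₁).ofLp, (d⁻¹ • cr v₁ v₂).ofLp]
    let f := Matrix.toLpLin 2 2 A
    have hA : A.det = d⁻¹ := by
      rw [Matrix.det_fin_three]
      simp [A, cr]
      field_simp
      rw [hd3]; ring
    have hf : LinearMap.det f = d⁻¹ := by
      rw [← hA]; simp [f]
    have hpre : {x : E3 | 0 ≤ inner ℝ (d⁻¹ • cr v₂ v₃) x ∧ 0 ≤ inner ℝ (d⁻¹ • cr v₃ v₁) x ∧ 0 ≤ inner ℝ (d⁻¹ • cr v₁ v₂) x ∧ inner ℝ (d⁻¹ • cr v₂ v₃) x + inner ℝ (d⁻¹ • cr v₃ v₁) x + inner ℝ (d⁻¹ • cr v₁ v₂) x ≤ (1 : ℝ)} = f ⁻¹' stdT := by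
      have e : ∀ x, f x 0 = inner ℝ (d⁻¹ • cr v₂ v₃) x ∧ f x 1 = inner ℝ (d⁻¹ • cr v₃ v₁) x ∧ f x 2 = inner ℝ (d⁻¹ • cr v₁ v₂) x := by
        intro x
        simp only [inner3, f, A, Matrix.toLpLin_apply, Matrix.mulVec, dotProduct, Fin.sum_univ_three]
        refine ⟨rfl, rfl, rfl⟩
      ext x
      simp only [stdT, Set.mem_preimage, Set.mem_ofPred_eq, (e x).1, (e x).2.1, (e x).2.2]
    rw [hpre, Measure.addHaar_preimage_linearMap _ (by rw [hf]; exact inv_ne_zero hd0), stdT_vol, hf, inv_inv,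
      ← ENNReal.ofReal_mul (abs_nonneg _)]
    congr 1; ring

open InnerProductGeometry in
lemma angle_strict (n m v : E3) (hm : m ≠ 0) (h1 : inner ℝ n v ≠ (0 : ℝ)) (h2 : inner ℝ m v = (0 : ℝ)) :
    n ≠ 0 ∧ 0 < angle n m ∧ angle n m < π := by
  have hn : n ≠ 0 := by rintro rfl; simp at h1
  refine ⟨hn, lt_of_le_of_ne (angle_nonneg _ _) ?_, lt_of_le_of_ne (angle_le_pi _ _) ?_⟩
  · intro h
    obtain ⟨-, r, hr, rfl⟩ := angle_eq_zero_iff.1 h.symm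
    rw [inner_smul_left] at h2
    simp [hr.ne'] at h2
    exact h1 h2
  · intro h
    obtain ⟨-, r, hr, rfl⟩ := angle_eq_pi_iff.1 h
    rw [inner_smul_left] at h2
    simp [hr.ne] at h2
    exact h1 h2

/-- dihedral angle from the inward face normals -/
def dih (n m : E3) : ℝ := π - InnerProductGeometry.angle n m

lemma dih_comm (n m : E3) : dih n m = dih m n := by
  unfold dih; rw [InnerProductGeometry.angle_comm]

def cone (p n₁ n₂ n₃ : E3) : Set E3 :=
  Metric.closedBall p 1 ∩ {x : E3 | 0 ≤ inner ℝ n₁ (x - p) ∧ 0 ≤ inner ℝ n₂ (x - p) ∧ 0 ≤ inner ℝ n₃ (x - p)}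

lemma cone_meas (p n₁ n₂ n₃ : E3) : MeasurableSet (cone p n₁ n₂ n₃) := by
  refine Metric.isClosed_closedBall.measurableSet.inter ?_
  apply IsClosed.measurableSet
  exact IsClosed.inter (s₁ := {x : E3 | 0 ≤ inner ℝ n₁ (x - p)}) (s₂ := {x : E3 | 0 ≤ inner ℝ n₂ (x - p) ∧ 0 ≤ inner ℝ n₃ (x - p)})
    (isClosed_le (by fun_prop) (by fun_prop))
    (IsClosed.inter (s₁ := {x : E3 | 0 ≤ inner ℝ n₂ (x - p)}) (s₂ := {x : E3 | 0 ≤ inner ℝ n₃ (x - p)})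
    (isClosed_le (by fun_prop) (by fun_prop)) (isClosed_le (by fun_prop) (by fun_prop)))

lemma cone_fin (p n₁ n₂ n₃ : E3) : volume (cone p n₁ n₂ n₃) ≠ ⊤ :=
  ne_top_of_le_ne_top (isCompact_closedBall p 1).measure_lt_top.ne (measure_mono Set.inter_subset_left)

lemma cone_vol (p n₁ n₂ n₃ w₁ w₂ w₃ : E3)
   (h11 : inner ℝ n₁ w₁ ≠ (0 : ℝ)) (h21 : inner ℝ n₂ w₁ = (0 : ℝ)) (h31 : inner ℝ n₃ w₁ = (0 : ℝ))
   (h22 : inner ℝ n₂ w₂ ≠ (0 : ℝ)) (h32 : inner ℝ n₃ w₂ = (0 : ℝ))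
   (h33 : inner ℝ n₃ w₃ ≠ (0 : ℝ)) :
    volume.real (cone p n₁ n₂ n₃) = (dih n₁ n₂ + dih n₁ n₃ + dih n₂ n₃ - π) / 3 := by
  have z3 : n₃ ≠ 0 := by rintro rfl; simp at h33
  obtain ⟨z2, a23, b23⟩ := angle_strict n₂ n₃ w₂ z3 h22 h32
  obtain ⟨z1, a13, b13⟩ := angle_strict n₁ n₃ w₁ z3 h11 h31
  obtain ⟨-, a12, b12⟩ := angle_strict n₁ n₂ w₁ z2 h11 h21
  have e : ∀ n m : E3, n ≠ 0 → m ≠ 0 → 0 < InnerProductGeometry.angle n m → InnerProductGeometry.angle n m < π →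
    volume.real (Metric.closedBall (0 : E3) 1 ∩ {x : E3 | 0 ≤ inner ℝ n x ∧ 0 ≤ inner ℝ m x}) = 2 / 3 * dih n m := by
    intro n m hn hm h0 h1
    rw [Measure.real, wedge_vol n m hn hm h0 h1, ENNReal.toReal_ofReal]; rfl
    nlinarith
  have g := girard n₁ n₂ n₃ _ _ _ z1 z2 z3 (e _ _ z1 z2 a12 b12) (e _ _ z1 z3 a13 b13) (e _ _ z2 z3 a23 b23)
  have t : volume.real (cone p n₁ n₂ n₃) = volume.real (Metric.closedBall (0 : E3) 1 ∩ {x : E3 | 0 ≤ inner ℝ n₁ x ∧ 0 ≤ inner ℝ n₂ x ∧ 0 ≤ inner ℝ n₃ x}) := by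
    rw [Measure.real, Measure.real, ← measure_preimage_add_right volume (-p) (Metric.closedBall (0 : E3) 1 ∩ {x : E3 | 0 ≤ inner ℝ n₁ x ∧ 0 ≤ inner ℝ n₂ x ∧ 0 ≤ inner ℝ n₃ x})]
    congr 2
    ext x
    simp [cone, ← sub_eq_add_neg, dist_eq_norm]
  rw [t, g]; ring

lemma hull_eq (p₀ p₁ p₂ p₃ m₁ m₂ m₃ : E3) (D : ℝ) (d : Dual (p₁ - p₀) (p₂ - p₀) (p₃ - p₀) m₁ m₂ m₃ D) :
    convexHull ℝ ({p₀, p₁, p₂, p₃} : Set E3) =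
      {x : E3 | 0 ≤ inner ℝ m₁ (x - p₀) ∧ 0 ≤ inner ℝ m₂ (x - p₀) ∧ 0 ≤ inner ℝ m₃ (x - p₀) ∧
        inner ℝ m₁ (x - p₀) + inner ℝ m₂ (x - p₀) + inner ℝ m₃ (x - p₀) ≤ (1 : ℝ)} := by
  apply Set.Subset.antisymm
  · apply convexHull_min
    · rintro x (rfl | rfl | rfl | rfl)
      · simp
      · simp [d.h11, d.h21, d.h31]
      · simp [d.h12, d.h22, d.h32]
      · simp [d.h13, d.h23, d.h33]
    · rintro x ⟨a1, a2, a3, a4⟩ y ⟨b1, b2, b3, b4⟩ s t hs ht hst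
      have e : s • x + t • y - p₀ = s • (x - p₀) + t • (y - p₀) := by
        have : p₀ = (s + t) • p₀ := by rw [hst, one_smul]
        nth_rw 1 [this]
        module
      simp only [Set.mem_ofPred_eq, e, inner_add_right, inner_smul_right]
      refine ⟨by positivity, by positivity, by positivity, ?_⟩
      nlinarith [mul_le_mul_of_nonneg_left a4 hs, mul_le_mul_of_nonneg_left b4 ht]
  · rintro x ⟨a1, a2, a3, a4⟩
    have ex := d.expand (x - p₀)
    set a := inner ℝ m₁ (x - p₀)
    set b := inner ℝ m₂ (x - p₀)
    set c := inner ℝ m₃ (x - p₀)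
    have hx : x = ∑ i : Fin 4, (![1 - a - b - c, a, b, c] i) • (![p₀, p₁, p₂, p₃] i) := by
      have : x = p₀ + (x - p₀) := by abel
      rw [this, ex]
      simp [Fin.sum_univ_four]
      module
    rw [hx]
    apply (convex_convexHull ℝ _).sum_mem
    · intro i _; fin_cases i <;> simp <;> linarith
    · simp [Fin.sum_univ_four]; ring
    · intro i _
      apply subset_convexHull
      fin_cases i <;> simp

lemma hull_vol (p₀ p₁ p₂ p₃ m₁ m₂ m₃ : E3) (D : ℝ) (d : Dual (p₁ - p₀) (p₂ - p₀) (p₃ - p₀) m₁ m₂ m₃ D) :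
    (volume (convexHull ℝ ({p₀, p₁, p₂, p₃} : Set E3))).toReal = D / 6 := by
  rw [hull_eq _ _ _ _ _ _ _ _ d]
  have := d.vol
  rw [← measure_preimage_add_right volume (-p₀)] at this
  simp only [Set.preimage_ofPred_eq, ← sub_eq_add_neg] at this
  rw [this, ENNReal.toReal_ofReal]
  linarith [d.hD]

/-- the sum of the four solid angles in terms of dihedral angles -/
lemma cones_sum (p₀ p₁ p₂ p₃ m₁ m₂ m₃ m₀ : E3) (D : ℝ) (d : Dual (p₁ - p₀) (p₂ - p₀) (p₃ - p₀) m₁ m₂ m₃ D)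
    (hm₀ : m₀ = -(m₁ + m₂ + m₃)) :
    volume.real (cone p₀ m₁ m₂ m₃) + volume.real (cone p₁ m₀ m₂ m₃) + volume.real (cone p₂ m₀ m₁ m₃) +
      volume.real (cone p₃ m₀ m₁ m₂) =
    (2 * (dih m₁ m₂ + dih m₁ m₃ + dih m₂ m₃ + dih m₀ m₁ + dih m₀ m₂ + dih m₀ m₃) - 4 * π) / 3 := by
  have k1 : inner ℝ m₀ (p₁ - p₀) = (-1 : ℝ) := by
    rw [hm₀, inner_neg_left, inner_add_left, inner_add_left, d.h11, d.h21, d.h31]; norm_num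
  have k2 : inner ℝ m₀ (p₂ - p₀) = (-1 : ℝ) := by
    rw [hm₀, inner_neg_left, inner_add_left, inner_add_left, d.h12, d.h22, d.h32]; norm_num
  have k3 : inner ℝ m₀ (p₃ - p₀) = (-1 : ℝ) := by
    rw [hm₀, inner_neg_left, inner_add_left, inner_add_left, d.h13, d.h23, d.h33]; norm_num
  have c0 := cone_vol p₀ m₁ m₂ m₃ (p₁ - p₀) (p₂ - p₀) (p₃ - p₀)
    (by rw [d.h11]; norm_num) d.h21 d.h31 (by rw [d.h22]; norm_num) d.h32 (by rw [d.h33]; norm_num)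
  have c1 := cone_vol p₁ m₀ m₂ m₃ (p₁ - p₀) (p₂ - p₀) (p₃ - p₀)
    (by rw [k1]; norm_num) d.h21 d.h31 (by rw [d.h22]; norm_num) d.h32 (by rw [d.h33]; norm_num)
  have c2 := cone_vol p₂ m₀ m₁ m₃ (p₂ - p₀) (p₁ - p₀) (p₃ - p₀)
    (by rw [k2]; norm_num) d.h12 d.h32 (by rw [d.h11]; norm_num) d.h31 (by rw [d.h33]; norm_num)
  have c3 := cone_vol p₃ m₀ m₁ m₂ (p₃ - p₀) (p₁ - p₀) (p₂ - p₀)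
    (by rw [k3]; norm_num) d.h13 d.h23 (by rw [d.h11]; norm_num) d.h21 (by rw [d.h22]; norm_num)
  rw [c0, c1, c2, c3]
  ring

lemma pieces (p₀ p₁ p₂ p₃ m₁ m₂ m₃ m₀ : E3) (D : ℝ) (d : Dual (p₁ - p₀) (p₂ - p₀) (p₃ - p₀) m₁ m₂ m₃ D)
    (hm₀ : m₀ = -(m₁ + m₂ + m₃)) (x : E3) :
    x ∈ convexHull ℝ ({p₀, p₁, p₂, p₃} : Set E3) ↔ 
      ∃ a b c : ℝ, 0 ≤ a ∧ 0 ≤ b ∧ 0 ≤ c ∧ a + b + c ≤ 1 ∧ x = p₀ + (a • (p₁ - p₀) + b • (p₂ - p₀) + c • (p₃ - p₀)) := by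
  rw [hull_eq _ _ _ _ _ _ _ _ d]
  constructor
  · rintro ⟨a1, a2, a3, a4⟩
    exact ⟨_, _, _, a1, a2, a3, a4, by rw [← d.expand]; abel⟩
  · rintro ⟨a, b, c, ha, hb, hc, hs, rfl⟩
    simp only [Set.mem_ofPred_eq, add_sub_cancel_left, inner_add_right, inner_smul_right, d.h11, d.h12, d.h13, d.h21, d.h22,
      d.h23, d.h31, d.h32, d.h33]
    refine ⟨by linarith, by linarith, by linarith, by linarith⟩

lemma gamma_le (p₀ p₁ p₂ p₃ m₁ m₂ m₃ m₀ : E3) (D : ℝ) (d : Dual (p₁ - p₀) (p₂ - p₀) (p₃ - p₀) m₁ m₂ m₃ D)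
    (hm₀ : m₀ = -(m₁ + m₂ + m₃)) :
    Gamma p₀ p₁ p₂ p₃ ≤ -δoct * (D / 6) +
      (2 * (dih m₁ m₂ + dih m₁ m₃ + dih m₂ m₃ + dih m₀ m₁ + dih m₀ m₂ + dih m₀ m₃) - 4 * π) / 3 := by
  rw [← cones_sum p₀ p₁ p₂ p₃ m₁ m₂ m₃ m₀ D d hm₀]
  unfold _root_.Gamma
  rw [hull_vol _ _ _ _ _ _ _ _ d]
  gcongr
  set U := cone p₀ m₁ m₂ m₃ ∪ cone p₁ m₀ m₂ m₃ ∪ cone p₂ m₀ m₁ m₃ ∪ cone p₃ m₀ m₁ m₂ with hU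
  have hUf : volume U ≠ ⊤ := by
    rw [hU]
    simp only [ne_eq, measure_union_eq_top_iff, cone_fin, or_self, not_false_eq_true]
  have hsub : (convexHull ℝ ({p₀, p₁, p₂, p₃} : Set E3) ∩
      (Metric.closedBall p₀ 1 ∪ Metric.closedBall p₁ 1 ∪ Metric.closedBall p₂ 1 ∪
        Metric.closedBall p₃ 1)) ⊆ U := by
    rintro x ⟨hx, hb⟩
    obtain ⟨a, b, c, ha, hb', hc, hs, rfl⟩ := (pieces p₀ p₁ p₂ p₃ m₁ m₂ m₃ m₀ D d hm₀ x).1 hx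
    rcases hb with ((hb | hb) | hb) | hb
    · refine Or.inl (Or.inl (Or.inl ⟨hb, ?_⟩))
      simp only [Set.mem_ofPred_eq, add_sub_cancel_left, inner_add_right, inner_smul_right, d.h11, d.h12, d.h13, d.h21, d.h22,
        d.h23, d.h31, d.h32, d.h33]
      refine ⟨by linarith, by linarith, by linarith⟩
    · refine Or.inl (Or.inl (Or.inr ⟨hb, ?_⟩))
      have : p₀ + (a • (p₁ - p₀) + b • (p₂ - p₀) + c • (p₃ - p₀)) - p₁ = (a - 1) • (p₁ - p₀) + b • (p₂ - p₀) + c • (p₃ - p₀) := by module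
      simp only [Set.mem_ofPred_eq, this, hm₀, inner_neg_left, inner_add_left, inner_add_right, inner_smul_right, d.h11, d.h12, d.h13, d.h21, d.h22,
        d.h23, d.h31, d.h32, d.h33]
      refine ⟨by linarith, by linarith, by linarith⟩
    · refine Or.inl (Or.inr ⟨hb, ?_⟩)
      have : p₀ + (a • (p₁ - p₀) + b • (p₂ - p₀) + c • (p₃ - p₀)) - p₂ = a • (p₁ - p₀) + (b - 1) • (p₂ - p₀) + c • (p₃ - p₀) := by module
      simp only [Set.mem_ofPred_eq, this, hm₀, inner_neg_left, inner_add_left, inner_add_right, inner_smul_right, d.h11, d.h12, d.h13, d.h21, d.h22,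
        d.h23, d.h31, d.h32, d.h33]
      refine ⟨by linarith, by linarith, by linarith⟩
    · refine Or.inr ⟨hb, ?_⟩
      have : p₀ + (a • (p₁ - p₀) + b • (p₂ - p₀) + c • (p₃ - p₀)) - p₃ = a • (p₁ - p₀) + b • (p₂ - p₀) + (c - 1) • (p₃ - p₀) := by module
      simp only [Set.mem_ofPred_eq, this, hm₀, inner_neg_left, inner_add_left, inner_add_right, inner_smul_right, d.h11, d.h12, d.h13, d.h21, d.h22,
        d.h23, d.h31, d.h32, d.h33]
      refine ⟨by linarith, by linarith, by linarith⟩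
  calc _ ≤ volume.real U := measureReal_mono hsub hUf
    _ ≤ _ := (measureReal_union_le _ _).trans (add_le_add_left ((measureReal_union_le _ _).trans
      (add_le_add_left (measureReal_union_le _ _) _)) _)

lemma balls_null (p q : E3) (h : 2 ≤ dist p q) (A B : Set E3) (hA : A ⊆ Metric.closedBall p 1) (hB : B ⊆ Metric.closedBall q 1) :
    volume (A ∩ B) = 0 := by
  apply measure_mono_null _ (Measure.addHaar_sphere volume p 1)
  rintro x ⟨hx, hy⟩
  have h1 : dist x p ≤ 1 := hA hx
  have h2 : dist x q ≤ 1 := hB hy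
  have := dist_triangle_left p q x
  rw [Metric.mem_sphere]
  linarith

/-- equality at the special simplex -/
lemma gamma_eq (p₀ p₁ p₂ p₃ m₁ m₂ m₃ m₀ : E3) (D : ℝ) (d : Dual (p₁ - p₀) (p₂ - p₀) (p₃ - p₀) m₁ m₂ m₃ D)
    (hm₀ : m₀ = -(m₁ + m₂ + m₃))
    (h01 : 2 ≤ dist p₀ p₁) (h02 : 2 ≤ dist p₀ p₂) (h03 : 2 ≤ dist p₀ p₃) (h23 : 2 ≤ dist p₂ p₃) (h13 : 2 ≤ dist p₁ p₃)
    (h12 : 2 ≤ dist p₁ p₂)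
    (g11 : inner ℝ (p₁ - p₀) (p₁ - p₀) = (8 : ℝ)) (g22 : inner ℝ (p₂ - p₀) (p₂ - p₀) = (4 : ℝ)) 
    (g33 : inner ℝ (p₃ - p₀) (p₃ - p₀) = (4 : ℝ)) (g12 : inner ℝ (p₁ - p₀) (p₂ - p₀) = (4 : ℝ)) 
    (g13 : inner ℝ (p₁ - p₀) (p₃ - p₀) = (4 : ℝ)) (g23 : inner ℝ (p₂ - p₀) (p₃ - p₀) = (2 : ℝ)) :
    Gamma p₀ p₁ p₂ p₃ = -δoct * (D / 6) +
      (2 * (dih m₁ m₂ + dih m₁ m₃ + dih m₂ m₃ + dih m₀ m₁ + dih m₀ m₂ + dih m₀ m₃) - 4 * π) / 3 := by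
  apply le_antisymm (gamma_le p₀ p₁ p₂ p₃ m₁ m₂ m₃ m₀ D d hm₀)
  rw [← cones_sum p₀ p₁ p₂ p₃ m₁ m₂ m₃ m₀ D d hm₀]
  unfold _root_.Gamma
  rw [hull_vol _ _ _ _ _ _ _ _ d]
  gcongr
  have b0 : cone p₀ m₁ m₂ m₃ ⊆ Metric.closedBall p₀ 1 := Set.inter_subset_left
  have b1 : cone p₁ m₀ m₂ m₃ ⊆ Metric.closedBall p₁ 1 := Set.inter_subset_left
  have b2 : cone p₂ m₀ m₁ m₃ ⊆ Metric.closedBall p₂ 1 := Set.inter_subset_left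
  have b3 : cone p₃ m₀ m₁ m₂ ⊆ Metric.closedBall p₃ 1 := Set.inter_subset_left
  have e1 : volume.real (cone p₀ m₁ m₂ m₃ ∪ cone p₁ m₀ m₂ m₃) = volume.real (cone p₀ m₁ m₂ m₃) + volume.real (cone p₁ m₀ m₂ m₃) :=
    measureReal_union₀ (cone_meas _ _ _ _).nullMeasurableSet (balls_null _ _ h01 _ _ b0 b1) (cone_fin _ _ _ _) (cone_fin _ _ _ _)
  have e2 : volume.real (cone p₀ m₁ m₂ m₃ ∪ cone p₁ m₀ m₂ m₃ ∪ cone p₂ m₀ m₁ m₃) = volume.real (cone p₀ m₁ m₂ m₃ ∪ cone p₁ m₀ m₂ m₃) + volume.real (cone p₂ m₀ m₁ m₃) := by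
    refine measureReal_union₀ (cone_meas _ _ _ _).nullMeasurableSet ?_ ?_ (cone_fin _ _ _ _)
    · rw [AEDisjoint, Set.union_inter_distrib_right]
      exact measure_union_null (balls_null _ _ h02 _ _ b0 b2) (balls_null _ _ h12 _ _ b1 b2)
    · simp only [ne_eq, measure_union_eq_top_iff, cone_fin, or_self, not_false_eq_true]
  have e3 : volume.real (cone p₀ m₁ m₂ m₃ ∪ cone p₁ m₀ m₂ m₃ ∪ cone p₂ m₀ m₁ m₃ ∪ cone p₃ m₀ m₁ m₂) = volume.real (cone p₀ m₁ m₂ m₃ ∪ cone p₁ m₀ m₂ m₃ ∪ cone p₂ m₀ m₁ m₃) + volume.real (cone p₃ m₀ m₁ m₂) := by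
    refine measureReal_union₀ (cone_meas _ _ _ _).nullMeasurableSet ?_ ?_ (cone_fin _ _ _ _)
    · rw [AEDisjoint, Set.union_inter_distrib_right, Set.union_inter_distrib_right]
      exact measure_union_null (measure_union_null (balls_null _ _ h03 _ _ b0 b3) (balls_null _ _ h13 _ _ b1 b3)) (balls_null _ _ h23 _ _ b2 b3)
    · simp only [ne_eq, measure_union_eq_top_iff, cone_fin, or_self, not_false_eq_true]
  rw [← e1, ← e2, ← e3]
  have nrm : ∀ a b c : ℝ, ‖a • (p₁ - p₀) + b • (p₂ - p₀) + c • (p₃ - p₀)‖ ^ 2 = 8 * a ^ 2 + 4 * b ^ 2 + 4 * c ^ 2 + 8 * a * b + 8 * a * c + 4 * b * c := by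
    intro a b c
    rw [← real_inner_self_eq_norm_sq]
    simp only [inner_add_left, inner_add_right, real_inner_smul_left, real_inner_smul_right, g11, g22, g33, g12, g13, g23,
      real_inner_comm (p₁ - p₀) (p₂ - p₀), real_inner_comm (p₁ - p₀) (p₃ - p₀), real_inner_comm (p₂ - p₀) (p₃ - p₀)]
    ring
  have cd : ∀ x p : E3, ∃ a b c : ℝ, x - p = a • (p₁ - p₀) + b • (p₂ - p₀) + c • (p₃ - p₀) := fun x p => ⟨_, _, _, d.expand _⟩
  have nb : ∀ x p : E3, ∀ a b c : ℝ, x - p = a • (p₁ - p₀) + b • (p₂ - p₀) + c • (p₃ - p₀) → x ∈ Metric.closedBall p 1 →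
      8 * a ^ 2 + 4 * b ^ 2 + 4 * c ^ 2 + 8 * a * b + 8 * a * c + 4 * b * c ≤ 1 := by
    intro x p a b c h hx
    rw [← nrm, ← h]
    rw [mem_closedBall_iff_norm] at hx
    nlinarith [norm_nonneg (x - p)]
  apply measureReal_mono
  · rintro x (((hx | hx) | hx) | hx)
    · obtain ⟨a, b, c, h⟩ := cd x p₀
      have := nb _ _ _ _ _ h hx.1
      refine ⟨(pieces p₀ p₁ p₂ p₃ m₁ m₂ m₃ m₀ D d hm₀ x).2 ?_, Or.inl (Or.inl (Or.inl hx.1))⟩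
      have hh := hx.2
      simp only [Set.mem_ofPred_eq, h, inner_add_right, inner_smul_right, d.h11, d.h12, d.h13, d.h21, d.h22,
        d.h23, d.h31, d.h32, d.h33] at hh
      obtain ⟨i1, i2, i3⟩ := hh
      have j1 : 0 ≤ a := by linarith
      have j2 : 0 ≤ b := by linarith
      have j3 : 0 ≤ c := by linarith
      refine ⟨a, b, c, j1, j2, j3, ?_, ?_⟩
      · nlinarith [mul_nonneg j1 j2, mul_nonneg j1 j3, mul_nonneg j2 j3]
      · rw [← h]; abel
    · obtain ⟨a, b, c, h⟩ := cd x p₁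
      have := nb _ _ _ _ _ h hx.1
      refine ⟨(pieces p₀ p₁ p₂ p₃ m₁ m₂ m₃ m₀ D d hm₀ x).2 ?_, Or.inl (Or.inl (Or.inr hx.1))⟩
      have hh := hx.2
      simp only [Set.mem_ofPred_eq, h, hm₀, inner_neg_left, inner_add_left, inner_add_right, inner_smul_right, d.h11, d.h12, d.h13, d.h21, d.h22,
        d.h23, d.h31, d.h32, d.h33] at hh
      obtain ⟨i1, i2, i3⟩ := hh
      have j2 : 0 ≤ b := by linarith
      have j3 : 0 ≤ c := by linarith
      obtain ⟨k, hk⟩ : ∃ k, k = -(a + b + c) := ⟨_, rfl⟩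
      have j1 : 0 ≤ k := by rw [hk]; linarith
      obtain rfl : a = -k - b - c := by linarith
      refine ⟨-k - b - c + 1, b, c, ?_, j2, j3, by linarith, ?_⟩
      · nlinarith [mul_nonneg j1 j2, mul_nonneg j1 j3, mul_nonneg j2 j3]
      · have : x = p₁ + (x - p₁) := by abel
        rw [this, h]; module
    · obtain ⟨a, b, c, h⟩ := cd x p₂
      have := nb _ _ _ _ _ h hx.1
      refine ⟨(pieces p₀ p₁ p₂ p₃ m₁ m₂ m₃ m₀ D d hm₀ x).2 ?_, Or.inl (Or.inr hx.1)⟩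
      have hh := hx.2
      simp only [Set.mem_ofPred_eq, h, hm₀, inner_neg_left, inner_add_left, inner_add_right, inner_smul_right, d.h11, d.h12, d.h13, d.h21, d.h22,
        d.h23, d.h31, d.h32, d.h33] at hh
      obtain ⟨i1, i2, i3⟩ := hh
      have j2 : 0 ≤ a := by linarith
      have j3 : 0 ≤ c := by linarith
      obtain ⟨k, hk⟩ : ∃ k, k = -(a + b + c) := ⟨_, rfl⟩
      have j1 : 0 ≤ k := by rw [hk]; linarith
      obtain rfl : b = -k - a - c := by linarith
      refine ⟨a, -k - a - c + 1, c, j2, ?_, j3, by linarith, ?_⟩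
      · nlinarith [mul_nonneg j1 j2, mul_nonneg j1 j3, mul_nonneg j2 j3, sq_nonneg (k - a)]
      · have : x = p₂ + (x - p₂) := by abel
        rw [this, h]; module
    · obtain ⟨a, b, c, h⟩ := cd x p₃
      have := nb _ _ _ _ _ h hx.1
      refine ⟨(pieces p₀ p₁ p₂ p₃ m₁ m₂ m₃ m₀ D d hm₀ x).2 ?_, Or.inr hx.1⟩
      have hh := hx.2
      simp only [Set.mem_ofPred_eq, h, hm₀, inner_neg_left, inner_add_left, inner_add_right, inner_smul_right, d.h11, d.h12, d.h13, d.h21, d.h22,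
        d.h23, d.h31, d.h32, d.h33] at hh
      obtain ⟨i1, i2, i3⟩ := hh
      have j2 : 0 ≤ a := by linarith
      have j3 : 0 ≤ b := by linarith
      obtain ⟨k, hk⟩ : ∃ k, k = -(a + b + c) := ⟨_, rfl⟩
      have j1 : 0 ≤ k := by rw [hk]; linarith
      obtain rfl : c = -k - a - b := by linarith
      refine ⟨a, b, -k - a - b + 1, j2, j3, ?_, by linarith, ?_⟩
      · nlinarith [mul_nonneg j1 j2, mul_nonneg j1 j3, mul_nonneg j2 j3, sq_nonneg (k - a)]
      · have : x = p₃ + (x - p₃) := by abel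
        rw [this, h]; module
  · refine ne_top_of_le_ne_top ?_ (measure_mono Set.inter_subset_right)
    have : ∀ p : E3, volume (Metric.closedBall p 1) ≠ ⊤ := fun p => (isCompact_closedBall p 1).measure_lt_top.ne
    simp only [ne_eq, measure_union_eq_top_iff, this, or_self, not_false_eq_true]

/-- the angle `t = arccos (1/√3)` -/
def tt : ℝ := arccos (1 / Real.sqrt 3)

lemma sq3 : Real.sqrt 3 * Real.sqrt 3 = 3 := Real.mul_self_sqrt (by norm_num)
lemma sq3pos : 0 < Real.sqrt 3 := Real.sqrt_pos.2 (by norm_num)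

lemma cos_tt : cos tt = 1 / Real.sqrt 3 := by
  have h := sq3
  have h0 := sq3pos
  apply Real.cos_arccos
  · have : 0 < 1 / Real.sqrt 3 := by positivity
    linarith
  · rw [div_le_one h0]; nlinarith

lemma cos_tt_sq : cos tt ^ 2 = 1 / 3 := by
  rw [cos_tt, div_pow, Real.sq_sqrt (by norm_num)]; norm_num

lemma tt_nonneg : 0 ≤ tt := Real.arccos_nonneg _
lemma tt_le : tt ≤ π / 2 := by
  unfold tt; rw [Real.arccos_le_pi_div_two]; positivity

lemma tt_ge : π / 4 ≤ tt := by
  by_contra h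
  push Not at h
  have h1 : cos (π / 4) < cos tt := Real.cos_lt_cos_of_nonneg_of_le_pi tt_nonneg (by linarith [Real.pi_pos]) h
  have h2 := cos_tt_sq
  have h3 : cos (π / 4) ^ 2 = 1 / 2 := by
    rw [Real.cos_pi_div_four, div_pow, Real.sq_sqrt (by norm_num)]; norm_num
  have h4 : 0 ≤ cos (π / 4) := by rw [Real.cos_pi_div_four]; positivity
  nlinarith

lemma cos_two_tt : cos (2 * tt) = - 1 / 3 := by
  rw [Real.cos_two_mul, cos_tt_sq]; norm_num

/-- lower bound for `κ = 4 t - π` -/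
lemma kappa_ge : 2 / 3 ≤ 4 * tt - π := by
  have h1 : cos (4 * tt - π) = 7 / 9 := by
    rw [Real.cos_sub_pi, show 4 * tt = 2 * (2 * tt) by ring, Real.cos_two_mul, cos_two_tt]; norm_num
  have h2 := Real.one_sub_sq_div_two_le_cos (x := 4 * tt - π)
  have h3 := tt_ge
  nlinarith

/-- `ρ = 1/√2` -/
def rho : ℝ := Real.sqrt 2 / 2
lemma rho_sq : rho * rho = 1 / 2 := by
  have := Real.mul_self_sqrt (show (0 : ℝ) ≤ 2 by norm_num)
  unfold rho; nlinarith
lemma rho_pos : 0 < rho := by unfold rho; positivity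
lemma rho_lo : 0.7071 ≤ rho := by nlinarith [rho_sq, rho_pos]
lemma rho_hi : rho ≤ 0.70711 := by nlinarith [rho_sq, rho_pos]

lemma sin_tt : Real.sqrt 3 * rho * sin tt = 1 := by
  have h0 : 0 ≤ sin tt := Real.sin_nonneg_of_nonneg_of_le_pi tt_nonneg (by linarith [tt_le, Real.pi_pos])
  have h1 := Real.sin_sq_add_cos_sq tt
  rw [cos_tt_sq] at h1
  have h2 : (Real.sqrt 3 * rho * sin tt) ^ 2 = 1 := by
    have : (Real.sqrt 3 * rho * sin tt) ^ 2 = (Real.sqrt 3 * Real.sqrt 3) * (rho * rho) * sin tt ^ 2 := by ring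
    rw [this, sq3, rho_sq]; linarith
  have h3 : 0 ≤ Real.sqrt 3 * rho * sin tt := by have := rho_pos; positivity
  nlinarith

/-- tangent line bound -/
lemma tangent (φ : ℝ) (h0 : 0 ≤ φ) (h1 : φ ≤ π / 2) : φ ≤ tt - rho * (Real.sqrt 3 * cos φ - 1) := by
  have key : cos φ ≤ cos tt - sin tt * (φ - tt) := by
    have hc := (strictConcaveOn_cos_Icc).concaveOn
    have m1 : φ ∈ Set.Icc (-(π / 2)) (π / 2) := ⟨by linarith, h1⟩
    have m2 : tt ∈ Set.Icc (-(π / 2)) (π / 2) := ⟨by linarith [tt_nonneg, tt_le], tt_le⟩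
    rcases lt_trichotomy φ tt with h | h | h
    · have := hc.le_slope_of_hasDerivAt m1 m2 h (Real.hasDerivAt_cos tt)
      rw [slope_def_field, le_div_iff₀ (by linarith)] at this
      linarith
    · subst h; simp
    · have := hc.slope_le_of_hasDerivAt m2 m1 h (Real.hasDerivAt_cos tt)
      rw [slope_def_field, div_le_iff₀ (by linarith)] at this
      linarith
  have h3 := mul_le_mul_of_nonneg_left key (mul_pos sq3pos rho_pos).le
  have h4 : Real.sqrt 3 * cos tt = 1 := by rw [cos_tt]; field_simp [sq3pos.ne']
  have h5 : Real.sqrt 3 * rho * (cos tt - sin tt * (φ - tt)) = rho * (Real.sqrt 3 * cos tt) - (Real.sqrt 3 * rho * sin tt) * (φ - tt) := by ring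
  rw [h5, h4, sin_tt] at h3
  nlinarith

/-- bound near a right angle -/
lemma near_right (θ c : ℝ) (h0 : 0 ≤ θ) (h1 : θ ≤ π) (hc : cos θ = c) (hs : |c| ≤ 1 / 2) :
    θ ≤ π / 2 - c + |c| ^ 3 := by
  have hsin : sin (π / 2 - θ) = c := by rw [Real.sin_pi_div_two_sub, hc]
  rcases le_total θ (π / 2) with h | h
  · have := Real.sin_le (x := π / 2 - θ) (by linarith)
    have : 0 ≤ |c| ^ 3 := by positivity
    linarith
  · obtain ⟨ψ, hψ⟩ : ∃ ψ, ψ = θ - π / 2 := ⟨_, rfl⟩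
    have hd : sin ψ = - c := by rw [hψ, ← hsin, ← Real.sin_neg]; ring_nf
    have a1 : 0 ≤ ψ := by linarith
    have a2 := Real.mul_le_sin a1 (by linarith)
    have hpi := Real.pi_pos
    have hpi2 := Real.pi_lt_d2
    have hd0 : 0 ≤ -c := by rw [← hd]; exact Real.sin_nonneg_of_nonneg_of_le_pi a1 (by linarith)
    have hab : |c| = -c := abs_of_nonpos (by linarith)
    rw [hab] at hs ⊢
    rw [hd, div_mul_eq_mul_div, div_le_iff₀ hpi] at a2
    obtain ⟨d, hdd⟩ : ∃ d, d = -c := ⟨_, rfl⟩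
    rw [← hdd] at hd hd0 hs a2 ⊢
    have a3 : ψ ≤ 1.575 * d := by nlinarith
    rcases eq_or_lt_of_le a1 with hz | hz
    · have : 0 ≤ d ^ 3 := by positivity
      linarith
    have a4 := Real.sin_gt_sub_cube hz
    have a5 : ψ ^ 3 ≤ (1.575 * d) ^ 3 := by gcongr
    have a6 : 0 ≤ d ^ 3 := by positivity
    nlinarith

lemma sqrt_lower (w : ℝ) (h : |w| ≤ 1 / 2) : 1 + w / 2 - w ^ 2 / 2 ≤ Real.sqrt (1 + w) := by
  obtain ⟨h1, h2⟩ := abs_le.1 h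
  apply Real.le_sqrt_of_sq_le
  nlinarith [mul_nonneg (sq_nonneg w) (show 0 ≤ 3 / 4 + w / 2 - w ^ 2 / 4 by nlinarith)]

/-- lower bound for the reciprocal square root -/
lemma inv_sqrt_lower (z s : ℝ) (h : |z| ≤ 1 / 2) (hs : 0 < s) (hs2 : s ^ 2 = 1 + z) : 1 - z / 2 ≤ 1 / s := by
  obtain ⟨h1, h2⟩ := abs_le.1 h
  rw [le_div_iff₀ hs]
  obtain rfl : z = s ^ 2 - 1 := by linarith
  nlinarith [mul_nonneg (sq_nonneg (s - 1)) (show 0 ≤ s + 2 by linarith)]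

lemma inv_sqrt_upper (z s : ℝ) (h : |z| ≤ 1 / 4) (hs : 0 < s) (hs2 : s ^ 2 = 1 + z) : 1 / s ≤ 1 - z / 2 + z ^ 2 / 2 := by
  obtain ⟨h1, h2⟩ := abs_le.1 h
  rw [div_le_iff₀ hs]
  have hp : 0 < 1 - z / 2 + z ^ 2 / 2 := by nlinarith
  by_contra hh
  push Not at hh
  have hs1 : s ^ 2 * (1 - z / 2 + z ^ 2 / 2) ^ 2 < 1 := by
    rw [← mul_pow, mul_comm]
    have : 0 < (1 - z / 2 + z ^ 2 / 2) * s := by positivity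
    nlinarith
  rw [hs2] at hs1
  have e : (1 + z) * (1 - z / 2 + z ^ 2 / 2) ^ 2 = 1 + z ^ 2 * (1 / 4 + 3 / 4 * z - z ^ 2 / 4 + z ^ 3 / 4) := by ring
  have h3 : 0 ≤ 1 / 4 + 3 / 4 * z - z ^ 2 / 4 + z ^ 3 / 4 := by
    nlinarith [mul_nonneg (sq_nonneg z) (show 0 ≤ z + 1 / 4 by linarith)]
  have := mul_nonneg (sq_nonneg z) h3
  linarith

structure Box (e1 e2 e3 e4 e5 e6 : ℝ) : Prop where
  a1 : 0 ≤ e1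
  a2 : 0 ≤ e2
  a3 : 0 ≤ e3
  a4 : 0 ≤ e4
  a5 : 0 ≤ e5
  a6 : 0 ≤ e6
  b1 : e1 ≤ 0.00566
  b2 : e2 ≤ 0.004001
  b3 : e3 ≤ 0.004001
  b4 : e4 ≤ 0.004001
  b5 : e5 ≤ 0.004001
  b6 : e6 ≤ 0.004001

lemma abs_mul_le' {x y c d : ℝ} (hx : |x| ≤ c) (hy : |y| ≤ d) : |x * y| ≤ c * d := by
  rw [abs_mul]; exact mul_le_mul hx hy (abs_nonneg _) ((abs_nonneg _).trans hx)

lemma M_bd (e1 T : ℝ) (h1 : 0 ≤ e1) (h2 : e1 ≤ 0.00566) (h3 : 0 ≤ T) (h4 : T ≤ 0.020005) :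
    (e1 + 2 * T) ^ 2 ≤ 0.0057 * e1 + 0.103 * T := by
  nlinarith [mul_nonneg h1 (sub_nonneg.2 h2), mul_nonneg h3 (sub_nonneg.2 h2), mul_nonneg h3 (sub_nonneg.2 h4)]

/-- relative deviation of a squared face area, right-angled faces -/
lemma faceR (e1 e2 e6 T : ℝ) (h1 : 0 ≤ e1) (h1' : e1 ≤ 0.00566) (h2 : 0 ≤ e2) (h6 : 0 ≤ e6) (h2' : e2 ≤ 0.004001) (h6' : e6 ≤ 0.004001) (hT : e2 + e6 ≤ T) :
    ∃ a, (8 - e1) * (4 + e2) - ((8 - e1 + e2 - e6) / 2) ^ 2 = 16 * (1 + a) ∧ |a - (e2 + e6) / 4| ≤ 0.0002 * e1 + 0.001 * T ∧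
      |a| ≤ (e1 + 2 * T) / 7 := by
  refine ⟨((8 - e1) * (4 + e2) - ((8 - e1 + e2 - e6) / 2) ^ 2) / 16 - 1, by ring, ?_⟩
  have e : ((8 - e1) * (4 + e2) - ((8 - e1 + e2 - e6) / 2) ^ 2) / 16 - 1 = (e2 + e6) / 4 - e1 * e2 / 16 - (e1 - e2 + e6) ^ 2 / 64 := by ring
  rw [e]
  have q1 : |e1 * e2| ≤ 0.00566 * e2 := abs_mul_le' (abs_le.2 ⟨by linarith, h1'⟩) (abs_le.2 ⟨by linarith, le_refl _⟩)
  have q2 : |(e1 - e2 + e6) * (e1 - e2 + e6)| ≤ 0.01 * (e1 + e2 + e6) :=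
    abs_mul_le' (abs_le.2 ⟨by linarith, by linarith⟩) (abs_le.2 ⟨by linarith, by linarith⟩)
  rw [← sq] at q2
  obtain ⟨q3, q4⟩ := abs_le.1 q1
  obtain ⟨q5, q6⟩ := abs_le.1 q2
  rw [abs_le, abs_le]
  refine ⟨⟨?_, ?_⟩, ?_, ?_⟩ <;> linarith

/-- relative deviation of a squared face area, equilateral faces -/
lemma faceE (e1 e2 e3 e4 T : ℝ) (h1 : 0 ≤ e1) (h2 : 0 ≤ e2) (h3 : 0 ≤ e3) (h4 : 0 ≤ e4) (h2' : e2 ≤ 0.004001) (h3' : e3 ≤ 0.004001) (h4' : e4 ≤ 0.004001) (hT : e2 + e3 + e4 ≤ T) :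
    ∃ a, (4 + e2) * (4 + e3) - ((4 + e2 + e3 - e4) / 2) ^ 2 = 12 * (1 + a) ∧ |a - (e2 + e3 + e4) / 6| ≤ 0.001 * T ∧
      |a| ≤ (e1 + 2 * T) / 10 := by
  refine ⟨((4 + e2) * (4 + e3) - ((4 + e2 + e3 - e4) / 2) ^ 2) / 12 - 1, by ring, ?_⟩
  have e : ((4 + e2) * (4 + e3) - ((4 + e2 + e3 - e4) / 2) ^ 2) / 12 - 1 = (e2 + e3 + e4) / 6 + e2 * e3 / 12 - (e2 + e3 - e4) ^ 2 / 48 := by ring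
  rw [e]
  have q1 : |e3 * e2| ≤ 0.004001 * e2 := abs_mul_le' (abs_le.2 ⟨by linarith, h3'⟩) (abs_le.2 ⟨by linarith, le_refl _⟩)
  rw [mul_comm] at q1
  have q2 : |(e2 + e3 - e4) * (e2 + e3 - e4)| ≤ 0.009 * (e2 + e3 + e4) :=
    abs_mul_le' (abs_le.2 ⟨by linarith, by linarith⟩) (abs_le.2 ⟨by linarith, by linarith⟩)
  rw [← sq] at q2
  obtain ⟨q3, q4⟩ := abs_le.1 q1
  obtain ⟨q5, q6⟩ := abs_le.1 q2
  rw [abs_le, abs_le]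
  refine ⟨⟨?_, ?_⟩, ?_, ?_⟩ <;> linarith

set_option maxHeartbeats 1000000 in
lemma edgeA {e1 e2 e3 e4 e5 e6 : ℝ} (B : Box e1 e2 e3 e4 e5 e6) (θ U V N : ℝ) (h0 : 0 ≤ θ) (hp : θ ≤ π)
    (hU : U = (8 - e1) * (4 + e2) - ((8 - e1 + e2 - e6) / 2) ^ 2)
    (hV : V = (4 + e2) * (4 + e3) - ((4 + e2 + e3 - e4) / 2) ^ 2)
    (hN : N = ((8 - e1 + e3 - e5) / 2) * (4 + e2) - ((4 + e2 + e3 - e4) / 2) * ((8 - e1 + e2 - e6) / 2))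
    (hc : cos θ * Real.sqrt (U * V) = N) :
    θ ≤ tt - rho * (- e1 / 8 - e2 / 12 - e3 / 12 + e4 / 6 - e5 / 4 - (0.0005 * e1 + 0.01 * (e2 + e3 + e4 + e5 + e6))) := by
  obtain ⟨a1, a2, a3, a4, a5, a6, b1, b2, b3, b4, b5, b6⟩ := B
  obtain ⟨T, hT⟩ : ∃ T, T = e2 + e3 + e4 + e5 + e6 := ⟨_, rfl⟩
  rw [← hT]
  have hM2 := M_bd e1 T a1 b1 (by linarith) (by linarith)
  obtain ⟨M, hM⟩ : ∃ M, M = e1 + 2 * T := ⟨_, rfl⟩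
  obtain ⟨a, ea, la, ma⟩ := faceR e1 e2 e6 T a1 b1 a2 a6 b2 b6 (by linarith)
  obtain ⟨b, eb, lb, mb⟩ := faceE e1 e2 e3 e4 T a1 a2 a3 a4 b2 b3 b4 (by linarith)
  rw [ea] at hU
  rw [eb] at hV
  rw [← hM] at ma mb hM2
  have hM0 : 0 ≤ M := by linarith
  have hM1 : M ≤ 0.0457 := by linarith
  obtain ⟨n, hn⟩ : ∃ n, n = N / 8 - 1 := ⟨_, rfl⟩
  have q1 : |((-e1 + e3 - e5) / 2) * e2| ≤ 0.005 * e2 := abs_mul_le' (abs_le.2 ⟨by linarith, by linarith⟩) (abs_le.2 ⟨by linarith, by linarith⟩)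
  have q2 : |((-e1 + e2 - e6) / 2) * ((e2 + e3 - e4) / 2)| ≤ 0.005 * (T / 2) := abs_mul_le' (abs_le.2 ⟨by linarith, by linarith⟩) (abs_le.2 ⟨by linarith, by linarith⟩)
  have en : n = (-e1 + e2 + 2 * e4 - 2 * e5 + e6) / 8 + (((-e1 + e3 - e5) / 2) * e2) / 8 - (((-e1 + e2 - e6) / 2) * ((e2 + e3 - e4) / 2)) / 8 := by
    rw [hn, hN]; ring
  obtain ⟨q3, q4⟩ := abs_le.1 q1
  obtain ⟨q5, q6⟩ := abs_le.1 q2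
  have mn : |n| ≤ M / 7 := by
    rw [abs_le, en]; constructor <;> linarith
  obtain ⟨z, hz⟩ : ∃ z, z = a + b + a * b := ⟨_, rfl⟩
  have mab := abs_mul_le' ma mb
  obtain ⟨r1, r2⟩ := abs_le.1 mab
  obtain ⟨r3, r4⟩ := abs_le.1 ma
  obtain ⟨r5, r6⟩ := abs_le.1 mb
  obtain ⟨r7, r8⟩ := abs_le.1 la
  obtain ⟨r9, r10⟩ := abs_le.1 lb
  obtain ⟨r11, r12⟩ := abs_le.1 mn
  have hMM : M * M ≤ 0.05 * M := mul_le_mul_of_nonneg_right (by linarith only [hM1]) hM0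
  have mz : |z| ≤ 2 * M / 7 := by
    rw [abs_le, hz]; constructor <;> linarith
  have mnz := abs_mul_le' mn mz
  obtain ⟨r13, r14⟩ := abs_le.1 mnz
  have UV : U * V = 192 * (1 + z) := by rw [hU, hV, hz]; ring
  have z1 : 0 < 1 + z := by have := (abs_le.1 mz).1; linarith
  have sUV : Real.sqrt (U * V) = Real.sqrt 3 * 8 * Real.sqrt (1 + z) := by
    rw [UV, Real.sqrt_mul (by norm_num), show (192 : ℝ) = 3 * 8 ^ 2 by norm_num, Real.sqrt_mul (by norm_num), Real.sqrt_sq (by norm_num)]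
  have hs0 := Real.sqrt_pos.2 z1
  have hinv := inv_sqrt_lower z _ (by linarith) hs0 (Real.sq_sqrt z1.le)
  have hNn : N = 8 * (1 + n) := by rw [hn]; ring
  rw [sUV, hNn] at hc
  have h3 := sq3
  have h3p := sq3pos
  have hcos : Real.sqrt 3 * cos θ = (1 + n) * (1 / Real.sqrt (1 + z)) := by
    field_simp
    linarith
  have hn1 : 0 < 1 + n := by linarith
  have hcpos : 0 < cos θ := by
    have : 0 < Real.sqrt 3 * cos θ := by rw [hcos]; positivity
    exact pos_of_mul_pos_right this h3p.le
  have hθ : θ ≤ π / 2 := by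
    by_contra h
    push Not at h
    have := Real.cos_nonpos_of_pi_div_two_le_of_le h.le (by linarith)
    linarith
  refine (tangent θ h0 hθ).trans ?_
  rw [hcos]
  have := mul_le_mul_of_nonneg_left hinv hn1.le
  have h5 : (1 + n) * (1 - z / 2) = 1 + n - z / 2 - n * z / 2 := by ring
  rw [h5] at this
  refine sub_le_sub_left (mul_le_mul_of_nonneg_left ?_ rho_pos.le) _
  clear h5 hcos sUV UV hinv hc hN hU hV ea eb
  obtain ⟨X, hX⟩ : ∃ X, X = (1 + n) * (1 / Real.sqrt (1 + z)) := ⟨_, rfl⟩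
  rw [← hX] at this ⊢
  linarith only [this, hz, r1, r2, r7, r8, r9, r10, r13, r14, hM2, hM, hT, q3, q4, q5, q6, en, a1, a2, a3, a4, a5, a6]

set_option maxHeartbeats 1000000 in
lemma edgeB {e1 e2 e3 e4 e5 e6 : ℝ} (B : Box e1 e2 e3 e4 e5 e6) (θ U V K : ℝ) (h0 : 0 ≤ θ) (hp : θ ≤ π)
    (hU : U = (4 + e2) * (4 + e3) - ((4 + e2 + e3 - e4) / 2) ^ 2)
    (hV : V = (4 + e5) * (4 + e6) - ((4 + e5 + e6 - e4) / 2) ^ 2)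
    (hK : K = 4 + (-2 * e1 - e2 - e3 + 2 * e4 - e5 - e6) - e3 * e2 + ((e2 + e3 - e4) / 2) * ((e2 + e3 - e4) / 2)
      - ((-e1 + e3 - e5) / 2) * ((e2 + e3 - e4) / 2) - ((-e1 + e2 - e6) / 2) * ((e2 + e3 - e4) / 2)
      + ((-e1 + e2 - e6) / 2) * e3 + ((-e1 + e3 - e5) / 2) * e2)
    (hc : cos θ * Real.sqrt (U * V) = -K) :
    θ ≤ 2 * tt - rho * (e1 / 4 + (e2 + e3 + e5 + e6) / 6 - e4 / 6 - (0.002 * e1 + 0.025 * (e2 + e3 + e4 + e5 + e6))) := by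
  obtain ⟨a1, a2, a3, a4, a5, a6, b1, b2, b3, b4, b5, b6⟩ := B
  obtain ⟨T, hT⟩ : ∃ T, T = e2 + e3 + e4 + e5 + e6 := ⟨_, rfl⟩
  rw [← hT]
  have hM2 := M_bd e1 T a1 b1 (by linarith) (by linarith)
  obtain ⟨M, hM⟩ : ∃ M, M = e1 + 2 * T := ⟨_, rfl⟩
  obtain ⟨a, ea, la, ma⟩ := faceE e1 e2 e3 e4 T a1 a2 a3 a4 b2 b3 b4 (by linarith)
  obtain ⟨b, eb, lb, mb⟩ := faceE e1 e5 e6 e4 T a1 a5 a6 a4 b5 b6 b4 (by linarith)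
  rw [ea] at hU
  rw [eb] at hV
  rw [← hM] at ma mb hM2
  have hM0 : 0 ≤ M := by linarith
  have hM1 : M ≤ 0.0457 := by linarith
  obtain ⟨g, hg⟩ : ∃ g, g = K / 4 - 1 := ⟨_, rfl⟩
  have u2 : |e2| ≤ e2 := abs_le.2 ⟨by linarith, le_refl _⟩
  have u3 : |e3| ≤ e3 := abs_le.2 ⟨by linarith, le_refl _⟩
  have us : |(e2 + e3 - e4) / 2| ≤ T / 2 := abs_le.2 ⟨by linarith, by linarith⟩
  have us' : |(e2 + e3 - e4) / 2| ≤ 0.005 := abs_le.2 ⟨by linarith, by linarith⟩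
  have up : |(-e1 + e3 - e5) / 2| ≤ 0.005 := abs_le.2 ⟨by linarith, by linarith⟩
  have uk : |(-e1 + e2 - e6) / 2| ≤ 0.005 := abs_le.2 ⟨by linarith, by linarith⟩
  obtain ⟨q1, q1'⟩ := abs_le.1 (abs_mul_le' (abs_le.2 ⟨by linarith, b3⟩ : |e3| ≤ 0.004001) u2)
  obtain ⟨q2, q2'⟩ := abs_le.1 (abs_mul_le' us' us)
  obtain ⟨q3, q3'⟩ := abs_le.1 (abs_mul_le' up us)
  obtain ⟨q4, q4'⟩ := abs_le.1 (abs_mul_le' uk us)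
  obtain ⟨q5, q5'⟩ := abs_le.1 (abs_mul_le' uk u3)
  obtain ⟨q6, q6'⟩ := abs_le.1 (abs_mul_le' up u2)
  have lg : |g - (-2 * e1 - e2 - e3 + 2 * e4 - e5 - e6) / 4| ≤ 0.005 * T := by
    rw [abs_le, hg, hK]; constructor <;> linarith
  obtain ⟨g1, g2⟩ := abs_le.1 lg
  have mg : |g| ≤ 0.55 * M := by
    rw [abs_le]; constructor <;> linarith
  obtain ⟨z, hz⟩ : ∃ z, z = a + b + a * b := ⟨_, rfl⟩
  have mab := abs_mul_le' ma mb
  obtain ⟨r1, r2⟩ := abs_le.1 mab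
  obtain ⟨r3, r4⟩ := abs_le.1 ma
  obtain ⟨r5, r6⟩ := abs_le.1 mb
  obtain ⟨r7, r8⟩ := abs_le.1 la
  obtain ⟨r9, r10⟩ := abs_le.1 lb
  obtain ⟨r11, r12⟩ := abs_le.1 mg
  have hMM : M * M ≤ 0.05 * M := mul_le_mul_of_nonneg_right (by linarith only [hM1]) hM0
  have mz : |z| ≤ M / 4 := by
    rw [abs_le, hz]; constructor <;> linarith only [hMM, r1, r2, r3, r4, r5, r6, hM0]
  obtain ⟨z', z''⟩ := abs_le.1 mz
  have UV : U * V = 144 * (1 + z) := by rw [hU, hV, hz]; ring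
  have z1 : 0 < 1 + z := by linarith
  have sUV : Real.sqrt (U * V) = 12 * Real.sqrt (1 + z) := by
    rw [UV, Real.sqrt_mul (by norm_num), show (144 : ℝ) = 12 ^ 2 by norm_num, Real.sqrt_sq (by norm_num)]
  have hs0 := Real.sqrt_pos.2 z1
  have hinv := inv_sqrt_upper z _ (by linarith) hs0 (Real.sq_sqrt z1.le)
  have hKg : K = 4 * (1 + g) := by rw [hg]; ring
  rw [sUV, hKg] at hc
  have hcos : cos θ = -(1 + g) * (1 / Real.sqrt (1 + z)) / 3 := by
    field_simp
    linarith
  have hg1 : 0 < 1 + g := by linarith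
  have hlow := mul_le_mul_of_nonneg_left hinv hg1.le
  obtain ⟨y, hy⟩ : ∃ y, y = -z / 2 + z ^ 2 / 2 := ⟨_, rfl⟩
  have mzz := abs_mul_le' mz mz
  obtain ⟨r13, r14⟩ := abs_le.1 mzz
  have my : |y| ≤ M / 7 := by
    rw [abs_le, hy]; constructor <;> linarith only [hMM, r13, r14, z', z'', hM0]
  have mgy := abs_mul_le' mg my
  obtain ⟨r15, r16⟩ := abs_le.1 mgy
  obtain ⟨w, hw⟩ : ∃ w, w = (-g - y - g * y) / 2 := ⟨_, rfl⟩
  obtain ⟨y', y''⟩ := abs_le.1 my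
  have mw : |w| ≤ 0.35 * M := by
    rw [abs_le, hw]; constructor <;> linarith only [hMM, r11, r12, y', y'', r15, r16, hM0]
  have mww := abs_mul_le' mw mw
  obtain ⟨r17, r18⟩ := abs_le.1 mww
  have hw3 : 1 + w ≤ 3 * ((1 + cos θ) / 2) := by
    rw [hcos, hw]
    have : (1 + g) * (1 - z / 2 + z ^ 2 / 2) = 1 + g + y + g * y := by rw [hy]; ring
    linarith
  have hφ1 : 0 ≤ θ / 2 := by linarith
  have hφ2 : θ / 2 ≤ π / 2 := by linarith
  have hcosφ : 0 ≤ cos (θ / 2) := Real.cos_nonneg_of_neg_pi_div_two_le_of_le (by linarith) hφ2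
  have hsq : (Real.sqrt 3 * cos (θ / 2)) ^ 2 = 3 * ((1 + cos θ) / 2) := by
    rw [mul_pow, Real.sq_sqrt (by norm_num), Real.cos_sq, show 2 * (θ / 2) = θ by ring]; ring
  have hge : Real.sqrt (1 + w) ≤ Real.sqrt 3 * cos (θ / 2) := by
    apply Real.sqrt_le_iff.2
    refine ⟨by positivity, ?_⟩
    rw [hsq]; exact hw3
  have hge2 := (sqrt_lower w (by linarith)).trans hge
  have ht := tangent (θ / 2) hφ1 hφ2
  have hfin : e1 / 4 + (e2 + e3 + e5 + e6) / 6 - e4 / 6 - (0.002 * e1 + 0.025 * T) ≤ 2 * (Real.sqrt 3 * cos (θ / 2) - 1) := by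
    obtain ⟨X, hX⟩ : ∃ X, X = Real.sqrt 3 * cos (θ / 2) := ⟨_, rfl⟩
    rw [← hX] at hge2 ⊢
    linarith only [hge2, hw, hy, hz, r17, r18, r15, r16, r13, r14, r1, r2, r7, r8, r9, r10, g1, g2, hM2, hM, hT, a1, a2, a3, a4, a5, a6]
  have := mul_le_mul_of_nonneg_left hfin rho_pos.le
  linarith

set_option maxHeartbeats 1000000 in
lemma edgeC {e1 e2 e3 e4 e5 e6 : ℝ} (B : Box e1 e2 e3 e4 e5 e6) (θ U V N : ℝ) (h0 : 0 ≤ θ) (hp : θ ≤ π)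
    (hU : U = (8 - e1) * (4 + e3) - ((8 - e1 + e3 - e5) / 2) ^ 2)
    (hV : V = (8 - e1) * (4 + e2) - ((8 - e1 + e2 - e6) / 2) ^ 2)
    (hN : N = (2 * e1 + 2 * e2 + 2 * e3 - 4 * e4 + 2 * e5 + 2 * e6) - e1 * ((e2 + e3 - e4) / 2) - ((-e1 + e3 - e5) / 2) * ((-e1 + e2 - e6) / 2))
    (hc : cos θ * Real.sqrt (U * V) = N) :
    θ ≤ π / 2 - ((e1 + e2 + e3 - 2 * e4 + e5 + e6) / 8 - (0.0008 * e1 + 0.01 * (e2 + e3 + e4 + e5 + e6))) := by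
  obtain ⟨a1, a2, a3, a4, a5, a6, b1, b2, b3, b4, b5, b6⟩ := B
  obtain ⟨T, hT⟩ : ∃ T, T = e2 + e3 + e4 + e5 + e6 := ⟨_, rfl⟩
  rw [← hT]
  have hM2 := M_bd e1 T a1 b1 (by linarith) (by linarith)
  obtain ⟨M, hM⟩ : ∃ M, M = e1 + 2 * T := ⟨_, rfl⟩
  obtain ⟨a, ea, la, ma⟩ := faceR e1 e3 e5 T a1 b1 a3 a5 b3 b5 (by linarith)
  obtain ⟨b, eb, lb, mb⟩ := faceR e1 e2 e6 T a1 b1 a2 a6 b2 b6 (by linarith)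
  rw [ea] at hU
  rw [eb] at hV
  rw [← hM] at ma mb hM2
  have hM0 : 0 ≤ M := by linarith
  have hM1 : M ≤ 0.0457 := by linarith
  obtain ⟨m, hm⟩ : ∃ m, m = N / 16 := ⟨_, rfl⟩
  have us : |(e2 + e3 - e4) / 2| ≤ T / 2 := abs_le.2 ⟨by linarith, by linarith⟩
  have up : |(-e1 + e3 - e5) / 2| ≤ 0.005 := abs_le.2 ⟨by linarith, by linarith⟩
  have uk : |(-e1 + e2 - e6) / 2| ≤ (e1 + T) / 2 := abs_le.2 ⟨by linarith, by linarith⟩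
  obtain ⟨q1, q1'⟩ := abs_le.1 (abs_mul_le' (abs_le.2 ⟨by linarith, b1⟩ : |e1| ≤ 0.00566) us)
  obtain ⟨q2, q2'⟩ := abs_le.1 (abs_mul_le' up uk)
  have lm : |m - (e1 + e2 + e3 - 2 * e4 + e5 + e6) / 8| ≤ 0.0002 * e1 + 0.001 * T := by
    rw [abs_le, hm, hN]; constructor <;> linarith
  obtain ⟨g1, g2⟩ := abs_le.1 lm
  have mm : |m| ≤ M / 7 := by
    rw [abs_le]; constructor <;> linarith
  obtain ⟨z, hz⟩ : ∃ z, z = a + b + a * b := ⟨_, rfl⟩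
  have mab := abs_mul_le' ma mb
  obtain ⟨r1, r2⟩ := abs_le.1 mab
  obtain ⟨r3, r4⟩ := abs_le.1 ma
  obtain ⟨r5, r6⟩ := abs_le.1 mb
  have hMM : M * M ≤ 0.05 * M := mul_le_mul_of_nonneg_right (by linarith only [hM1]) hM0
  have mz : |z| ≤ M / 3 := by
    rw [abs_le, hz]; constructor <;> linarith only [hMM, r1, r2, r3, r4, r5, r6, hM0]
  obtain ⟨z', z''⟩ := abs_le.1 mz
  have UV : U * V = 256 * (1 + z) := by rw [hU, hV, hz]; ring
  have z1 : 0 < 1 + z := by linarith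
  have sUV : Real.sqrt (U * V) = 16 * Real.sqrt (1 + z) := by
    rw [UV, Real.sqrt_mul (by norm_num), show (256 : ℝ) = 16 ^ 2 by norm_num, Real.sqrt_sq (by norm_num)]
  have hs0 := Real.sqrt_pos.2 z1
  have hinv := inv_sqrt_upper z _ (by linarith) hs0 (Real.sq_sqrt z1.le)
  have hinv' := inv_sqrt_lower z _ (by linarith) hs0 (Real.sq_sqrt z1.le)
  have hNm : N = 16 * m := by rw [hm]; ring
  rw [sUV, hNm] at hc
  obtain ⟨i, hi⟩ : ∃ i, i = 1 / Real.sqrt (1 + z) := ⟨_, rfl⟩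
  have hcos : cos θ = m * i := by
    rw [hi]
    field_simp
    linarith
  rw [← hi] at hinv hinv'
  have mzz := abs_mul_le' mz mz
  obtain ⟨r13, r14⟩ := abs_le.1 mzz
  have mi : |i - 1| ≤ M / 3 := by
    rw [abs_le]; constructor <;> linarith only [hMM, r13, r14, z', z'', hM0, hinv, hinv']
  obtain ⟨r15, r16⟩ := abs_le.1 (abs_mul_le' mm mi)
  obtain ⟨c, hcc⟩ : ∃ c, c = m * i := ⟨_, rfl⟩
  obtain ⟨m1, m2⟩ := abs_le.1 mm
  have ec : c = m + m * (i - 1) := by rw [hcc]; ring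
  have mc : |c| ≤ M / 6 := by
    rw [abs_le, ec]; constructor <;> linarith only [hMM, r15, r16, m1, m2, hM0]
  have m3 : |c| ^ 3 ≤ (M / 6) ^ 3 := by gcongr
  have m4 : (M / 6) ^ 3 ≤ 0.001 * M ^ 2 := by
    have := mul_le_mul_of_nonneg_left hM1 (sq_nonneg M)
    nlinarith only [this]
  have := near_right θ c h0 hp (by rw [hcos, hcc]) (by linarith)
  linarith only [this, m3, m4, ec, r15, r16, g1, g2, hM2, hM, hT, a1, a2, a3, a4, a5, a6]

set_option maxHeartbeats 1000000 in
/-- the volume factor -/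
lemma vol_bd {e1 e2 e3 e4 e5 e6 : ℝ} (B : Box e1 e2 e3 e4 e5 e6) (D2 : ℝ)
    (hD : D2 = (8 - e1) * (4 + e2) * (4 + e3) + 2 * ((8 - e1 + e2 - e6) / 2) * ((8 - e1 + e3 - e5) / 2) * ((4 + e2 + e3 - e4) / 2)
      - (8 - e1) * ((4 + e2 + e3 - e4) / 2) ^ 2 - (4 + e2) * ((8 - e1 + e3 - e5) / 2) ^ 2 - (4 + e3) * ((8 - e1 + e2 - e6) / 2) ^ 2) :
    1 + (e1 / 16 + (e2 + e3 + e5 + e6) / 8 - (0.001 * e1 + 0.01 * (e2 + e3 + e4 + e5 + e6))) ≤ Real.sqrt (D2 / 32) ∧ 16 ≤ D2 := by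
  obtain ⟨a1, a2, a3, a4, a5, a6, b1, b2, b3, b4, b5, b6⟩ := B
  obtain ⟨T, hT⟩ : ∃ T, T = e2 + e3 + e4 + e5 + e6 := ⟨_, rfl⟩
  rw [← hT]
  have hM2 := M_bd e1 T a1 b1 (by linarith) (by linarith)
  obtain ⟨M, hM⟩ : ∃ M, M = e1 + 2 * T := ⟨_, rfl⟩
  rw [← hM] at hM2
  have hM0 : 0 ≤ M := by linarith
  have hM1 : M ≤ 0.0457 := by linarith
  have hMM : M * M ≤ 0.05 * M := mul_le_mul_of_nonneg_right (by linarith only [hM1]) hM0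
  obtain ⟨s, hs⟩ : ∃ s, s = (e2 + e3 - e4) / 2 := ⟨_, rfl⟩
  obtain ⟨p, hp⟩ : ∃ p, p = (-e1 + e3 - e5) / 2 := ⟨_, rfl⟩
  obtain ⟨k, hk⟩ : ∃ k, k = (-e1 + e2 - e6) / 2 := ⟨_, rfl⟩
  have v1 : |e1| ≤ 0.0057 := abs_le.2 ⟨by linarith, by linarith⟩
  have v2 : |e2| ≤ T := abs_le.2 ⟨by linarith, by linarith⟩
  have v3 : |e3| ≤ T := abs_le.2 ⟨by linarith, by linarith⟩
  have v2' : |e2| ≤ 0.0041 := abs_le.2 ⟨by linarith, by linarith⟩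
  have v3' : |e3| ≤ 0.0041 := abs_le.2 ⟨by linarith, by linarith⟩
  have vs : |s| ≤ T / 2 := abs_le.2 ⟨by linarith, by linarith⟩
  have vp : |p| ≤ (e1 + T) / 2 := abs_le.2 ⟨by linarith, by linarith⟩
  have vk : |k| ≤ (e1 + T) / 2 := abs_le.2 ⟨by linarith, by linarith⟩
  have vs' : |s| ≤ 0.005 := abs_le.2 ⟨by linarith, by linarith⟩
  have vp' : |p| ≤ 0.005 := abs_le.2 ⟨by linarith, by linarith⟩
  have vk' : |k| ≤ 0.005 := abs_le.2 ⟨by linarith, by linarith⟩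
  have eD : D2 = 32 + (4 * e1 + 8 * e2 + 8 * e3 + 8 * e5 + 8 * e6) 
      + (8 * (e2 * e3) - 4 * (e1 * e2) - 4 * (e1 * e3) + 8 * (k * s) + 8 * (p * s) + 4 * (k * p) - 8 * (s * s) + 4 * (e1 * s)
        - 4 * (p * p) - 8 * (p * e2) - 4 * (k * k) - 8 * (k * e3))
      + (-(e1 * (e2 * e3)) + 2 * (s * (k * p)) + e1 * (s * s) - e2 * (p * p) - e3 * (k * k)) := by
    rw [hD, hs, hp, hk]; ring
  have t1 := abs_mul_le' v2' v3
  have t2 := abs_mul_le' v1 v2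
  have t3 := abs_mul_le' v1 v3
  have t4 := abs_mul_le' vk' vs
  have t5 := abs_mul_le' vp' vs
  have t6 := abs_mul_le' vk' vp
  have t7 := abs_mul_le' vs' vs
  have t8 := abs_mul_le' v1 vs
  have t9 := abs_mul_le' vp' vp
  have t10 := abs_mul_le' vp' v2
  have t11 := abs_mul_le' vk' vk
  have t12 := abs_mul_le' vk' v3
  obtain ⟨c1, d1⟩ := abs_le.1 (abs_mul_le' v1 t1)
  obtain ⟨c2, d2⟩ := abs_le.1 (abs_mul_le' vs' t6)
  obtain ⟨c3, d3⟩ := abs_le.1 (abs_mul_le' v1 t7)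
  obtain ⟨c4, d4⟩ := abs_le.1 (abs_mul_le' v2' t9)
  obtain ⟨c5, d5⟩ := abs_le.1 (abs_mul_le' v3' t11)
  rw [abs_le] at t1 t2 t3 t4 t5 t6 t7 t8 t9 t10 t11 t12
  obtain ⟨s1, t1⟩ := t1
  obtain ⟨s2, t2⟩ := t2
  obtain ⟨s3, t3⟩ := t3
  obtain ⟨s4, t4⟩ := t4
  obtain ⟨s5, t5⟩ := t5
  obtain ⟨s6, t6⟩ := t6
  obtain ⟨s7, t7⟩ := t7
  obtain ⟨s8, t8⟩ := t8
  obtain ⟨s9, t9⟩ := t9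
  obtain ⟨s10, t10⟩ := t10
  obtain ⟨s11, t11⟩ := t11
  obtain ⟨s12, t12⟩ := t12
  have hT0 : 0 ≤ T := by linarith only [hT, a2, a3, a4, a5, a6]
  have up : D2 ≤ 32 + (4 * e1 + 8 * e2 + 8 * e3 + 8 * e5 + 8 * e6) + 0.05 * e1 + 0.4 * T := by
    rw [eD]
    linarith only [d1, d2, d3, d4, d5, c1, c2, c3, c4, c5, s1, s2, s3, s4, s5, s6, s7, s8, s9, s10, s11, s12, t1, t2, t3, t4, t5, t6, t7, t8, t9, t10, t11, t12, hT0, a1]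
  have lo : 32 + (4 * e1 + 8 * e2 + 8 * e3 + 8 * e5 + 8 * e6) - 0.05 * e1 - 0.4 * T ≤ D2 := by
    rw [eD]
    linarith only [d1, d2, d3, d4, d5, c1, c2, c3, c4, c5, s1, s2, s3, s4, s5, s6, s7, s8, s9, s10, s11, s12, t1, t2, t3, t4, t5, t6, t7, t8, t9, t10, t11, t12, hT0, a1]
  obtain ⟨w, hw⟩ : ∃ w, w = D2 / 32 - 1 := ⟨_, rfl⟩
  have mw : |w| ≤ M / 7 := by
    rw [abs_le]
    constructor <;> linarith only [hw, up, lo, hM, hT, a1, a2, a3, a4, a5, a6]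
  obtain ⟨f1, f2⟩ := abs_le.1 (abs_mul_le' mw mw)
  have hl := sqrt_lower w (by linarith only [mw, hM1])
  rw [show D2 / 32 = 1 + w by rw [hw]; ring]
  refine ⟨hl.trans' ?_, ?_⟩
  · linarith only [hw, lo, f1, f2, hM2, hM, hT, a1, a2, a3, a4, a5, a6]
  · linarith only [lo, hT, a1, a2, a3, a4, a5, a6, b1, b2, b3, b4, b5, b6]

lemma dih_nonneg (n m : E3) : 0 ≤ dih n m := by
  unfold dih; linarith [InnerProductGeometry.angle_le_pi n m]

lemma dih_le (n m : E3) : dih n m ≤ π := by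
  unfold dih; linarith [InnerProductGeometry.angle_nonneg n m]

lemma dih_cos (n m : E3) (D U V W : ℝ) (hU : D ^ 2 * inner ℝ n n = U) (hV : D ^ 2 * inner ℝ m m = V)
    (hW : D ^ 2 * inner ℝ n m = -W) : cos (dih n m) * Real.sqrt (U * V) = W := by
  have h := InnerProductGeometry.cos_angle_mul_norm_mul_norm n m
  have e : U * V = (D ^ 2 * (‖n‖ * ‖m‖)) ^ 2 := by
    rw [← hU, ← hV, real_inner_self_eq_norm_sq, real_inner_self_eq_norm_sq]; ring
  rw [e, Real.sqrt_sq (by positivity), dih, Real.cos_pi_sub]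
  have : -cos (InnerProductGeometry.angle n m) * (D ^ 2 * (‖n‖ * ‖m‖)) = -(D ^ 2 * (cos (InnerProductGeometry.angle n m) * (‖n‖ * ‖m‖))) := by ring
  rw [this, h, hW]; ring

lemma delta_vol (D : ℝ) (hD : 0 < D) : δoct * (D / 6) = (4 * tt - π) * Real.sqrt (D ^ 2 / 32) := by
  have h8 : Real.sqrt 8 = 2 * Real.sqrt 2 := by
    rw [show (8 : ℝ) = 2 ^ 2 * 2 by norm_num, Real.sqrt_mul (by norm_num), Real.sqrt_sq (by norm_num)]
  have h32 : Real.sqrt 32 = 4 * Real.sqrt 2 := by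
    rw [show (32 : ℝ) = 4 ^ 2 * 2 by norm_num, Real.sqrt_mul (by norm_num), Real.sqrt_sq (by norm_num)]
  rw [Real.sqrt_div (by positivity), Real.sqrt_sq hD.le, h32, δoct, h8, ← tt]
  have : 0 < Real.sqrt 2 := by positivity
  field_simp
  ring

/-- everything about the Gram data of the simplex -/
structure GData (m₁ m₂ m₃ m₀ : E3) (D e1 e2 e3 e4 e5 e6 : ℝ) : Prop where
  f11 : D ^ 2 * inner ℝ m₁ m₁ = (4 + e2) * (4 + e3) - ((4 + e2 + e3 - e4) / 2) ^ 2
  f22 : D ^ 2 * inner ℝ m₂ m₂ = (8 - e1) * (4 + e3) - ((8 - e1 + e3 - e5) / 2) ^ 2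
  f33 : D ^ 2 * inner ℝ m₃ m₃ = (8 - e1) * (4 + e2) - ((8 - e1 + e2 - e6) / 2) ^ 2
  f00 : D ^ 2 * inner ℝ m₀ m₀ = (4 + e5) * (4 + e6) - ((4 + e5 + e6 - e4) / 2) ^ 2
  f12 : D ^ 2 * inner ℝ m₁ m₂ = -(((8 - e1 + e2 - e6) / 2) * (4 + e3) - ((4 + e3 + e2 - e4) / 2) * ((8 - e1 + e3 - e5) / 2))
  f13 : D ^ 2 * inner ℝ m₁ m₃ = -(((8 - e1 + e3 - e5) / 2) * (4 + e2) - ((4 + e2 + e3 - e4) / 2) * ((8 - e1 + e2 - e6) / 2))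
  f02 : D ^ 2 * inner ℝ m₀ m₂ = -(((8 - e1 + e6 - e2) / 2) * (4 + e5) - ((4 + e5 + e6 - e4) / 2) * ((8 - e1 + e5 - e3) / 2))
  f03 : D ^ 2 * inner ℝ m₀ m₃ = -(((8 - e1 + e5 - e3) / 2) * (4 + e6) - ((4 + e6 + e5 - e4) / 2) * ((8 - e1 + e6 - e2) / 2))
  f23 : D ^ 2 * inner ℝ m₂ m₃ = -((2 * e1 + 2 * e2 + 2 * e3 - 4 * e4 + 2 * e5 + 2 * e6) - e1 * ((e2 + e3 - e4) / 2) - ((-e1 + e3 - e5) / 2) * ((-e1 + e2 - e6) / 2))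
  f01 : D ^ 2 * inner ℝ m₀ m₁ = 4 + (-2 * e1 - e2 - e3 + 2 * e4 - e5 - e6) - e3 * e2 + ((e2 + e3 - e4) / 2) * ((e2 + e3 - e4) / 2)
      - ((-e1 + e3 - e5) / 2) * ((e2 + e3 - e4) / 2) - ((-e1 + e2 - e6) / 2) * ((e2 + e3 - e4) / 2)
      + ((-e1 + e2 - e6) / 2) * e3 + ((-e1 + e3 - e5) / 2) * e2
  det : D ^ 2 = (8 - e1) * (4 + e2) * (4 + e3) + 2 * ((8 - e1 + e2 - e6) / 2) * ((8 - e1 + e3 - e5) / 2) * ((4 + e2 + e3 - e4) / 2)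
      - (8 - e1) * ((4 + e2 + e3 - e4) / 2) ^ 2 - (4 + e2) * ((8 - e1 + e3 - e5) / 2) ^ 2 - (4 + e3) * ((8 - e1 + e2 - e6) / 2) ^ 2

lemma gdata (v₁ v₂ v₃ m₁ m₂ m₃ m₀ : E3) (D e1 e2 e3 e4 e5 e6 : ℝ) (d : Dual v₁ v₂ v₃ m₁ m₂ m₃ D) (hm₀ : m₀ = -(m₁ + m₂ + m₃))
    (g11 : inner ℝ v₁ v₁ = 8 - e1) (g22 : inner ℝ v₂ v₂ = 4 + e2) (g33 : inner ℝ v₃ v₃ = 4 + e3)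
    (g12 : inner ℝ v₁ v₂ = (8 - e1 + e2 - e6) / 2) (g13 : inner ℝ v₁ v₃ = (8 - e1 + e3 - e5) / 2)
    (g23 : inner ℝ v₂ v₃ = (4 + e2 + e3 - e4) / 2) : GData m₁ m₂ m₃ m₀ D e1 e2 e3 e4 e5 e6 := by
  have x11 := d.g11
  have x22 := d.g22
  have x33 := d.g33
  have x12 := d.g12
  have x13 := d.g13
  have x23 := d.g23
  have xd := d.det
  rw [g11, g22, g33, g12, g13, g23] at xd
  rw [g22, g33, g23] at x11
  rw [g11, g33, g13] at x22
  rw [g11, g22, g12] at x33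
  rw [g23, g13, g12, g33] at x12
  rw [g23, g13, g12, g22] at x13
  rw [g23, g13, g12, g11] at x23
  have i1 : inner ℝ m₀ m₁ = -(inner ℝ m₁ m₁ + inner ℝ m₁ m₂ + inner ℝ m₁ m₃) := by
    rw [hm₀, inner_neg_left, inner_add_left, inner_add_left, real_inner_comm m₁ m₂, real_inner_comm m₁ m₃]
  have i2 : inner ℝ m₀ m₂ = -(inner ℝ m₁ m₂ + inner ℝ m₂ m₂ + inner ℝ m₂ m₃) := by
    rw [hm₀, inner_neg_left, inner_add_left, inner_add_left, real_inner_comm m₂ m₃]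
  have i3 : inner ℝ m₀ m₃ = -(inner ℝ m₁ m₃ + inner ℝ m₂ m₃ + inner ℝ m₃ m₃) := by
    rw [hm₀, inner_neg_left, inner_add_left, inner_add_left]
  have i0 : inner ℝ m₀ m₀ = -(inner ℝ m₀ m₁ + inner ℝ m₀ m₂ + inner ℝ m₀ m₃) := by
    conv_lhs => rw [hm₀]
    rw [inner_neg_left, inner_add_left, inner_add_left, ← hm₀, real_inner_comm m₀ m₁, real_inner_comm m₀ m₂, real_inner_comm m₀ m₃]
  refine ⟨x11, x22, x33, ?_, ?_, ?_, ?_, ?_, ?_, ?_, xd⟩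
  · rw [i0, i1, i2, i3]
    linear_combination x11 + x22 + x33 + 2 * x12 + 2 * x13 + 2 * x23
  · rw [x12]; ring
  · rw [x13]; ring
  · rw [i2]; linear_combination -x12 - x22 - x23
  · rw [i3]; linear_combination -x13 - x33 - x23
  · rw [x23]; ring
  · rw [i1]; linear_combination -x11 - x12 - x13

lemma kappa_le : 4 * tt - π ≤ 1 := by
  have h1 : cos (4 * tt - π) = 7 / 9 := by
    rw [Real.cos_sub_pi, show 4 * tt = 2 * (2 * tt) by ring, Real.cos_two_mul, cos_two_tt]; norm_num
  by_contra h
  push Not at h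
  have h2 := Real.cos_lt_cos_of_nonneg_of_le_pi (by norm_num : (0 : ℝ) ≤ 1) (by linarith [tt_le] : 4 * tt - π ≤ π) h
  linarith [Real.cos_one_le]

/-- the main estimate -/
lemma main_bd (m₁ m₂ m₃ m₀ : E3) (D e1 e2 e3 e4 e5 e6 : ℝ) (hD : 0 < D) (B : Box e1 e2 e3 e4 e5 e6)
    (g : GData m₁ m₂ m₃ m₀ D e1 e2 e3 e4 e5 e6) :
    -δoct * (D / 6) +
      (2 * (dih m₁ m₂ + dih m₁ m₃ + dih m₂ m₃ + dih m₀ m₁ + dih m₀ m₂ + dih m₀ m₃) - 4 * π) / 3 ≤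
    -0.001 * (e1 + e2 + e3 + e4 + e5 + e6) := by
  have B1 : Box e1 e3 e2 e4 e6 e5 := ⟨B.a1, B.a3, B.a2, B.a4, B.a6, B.a5, B.b1, B.b3, B.b2, B.b4, B.b6, B.b5⟩
  have B2 : Box e1 e6 e5 e4 e3 e2 := ⟨B.a1, B.a6, B.a5, B.a4, B.a3, B.a2, B.b1, B.b6, B.b5, B.b4, B.b3, B.b2⟩
  have B3 : Box e1 e5 e6 e4 e2 e3 := ⟨B.a1, B.a5, B.a6, B.a4, B.a2, B.a3, B.b1, B.b5, B.b6, B.b4, B.b2, B.b3⟩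
  have A1 := edgeA B (dih m₃ m₁) _ _ _ (dih_nonneg _ _) (dih_le _ _) rfl rfl rfl
    (dih_cos _ _ D _ _ _ g.f33 g.f11 (by rw [real_inner_comm]; exact g.f13))
  have A2 := edgeA B1 (dih m₂ m₁) _ _ _ (dih_nonneg _ _) (dih_le _ _) rfl rfl rfl
    (dih_cos _ _ D _ _ _ g.f22 (by rw [g.f11]; ring) (by rw [real_inner_comm]; exact g.f12))
  have A3 := edgeA B2 (dih m₃ m₀) _ _ _ (dih_nonneg _ _) (dih_le _ _) rfl rfl rfl
    (dih_cos _ _ D _ _ _ (by rw [g.f33]; ring) (by rw [g.f00]; ring) (by rw [real_inner_comm]; exact g.f03))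
  have A4 := edgeA B3 (dih m₂ m₀) _ _ _ (dih_nonneg _ _) (dih_le _ _) rfl rfl rfl
    (dih_cos _ _ D _ _ _ (by rw [g.f22]; ring) (by rw [g.f00]) (by rw [real_inner_comm]; exact g.f02))
  have A5 := edgeB B (dih m₁ m₀) _ _ _ (dih_nonneg _ _) (dih_le _ _) rfl rfl rfl
    (dih_cos _ _ D _ _ _ g.f11 g.f00 (by rw [real_inner_comm, neg_neg]; exact g.f01))
  have A6 := edgeC B (dih m₂ m₃) _ _ _ (dih_nonneg _ _) (dih_le _ _) rfl rfl rfl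
    (dih_cos _ _ D _ _ _ g.f22 g.f33 g.f23)
  obtain ⟨A7, -⟩ := vol_bd B _ g.det
  rw [dih_comm m₁ m₂, dih_comm m₁ m₃, dih_comm m₀ m₁, dih_comm m₀ m₂, dih_comm m₀ m₃, neg_mul, delta_vol D hD]
  obtain ⟨a1, a2, a3, a4, a5, a6, b1, b2, b3, b4, b5, b6⟩ := B
  have hk := kappa_ge
  obtain ⟨L, hL⟩ : ∃ L, L = e1 / 16 + (e2 + e3 + e5 + e6) / 8 - (0.001 * e1 + 0.01 * (e2 + e3 + e4 + e5 + e6)) := ⟨_, rfl⟩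
  rw [← hL] at A7
  have hvol : (4 * tt - π) + 2 / 3 * L - 0.004 * e4 ≤ (4 * tt - π) * Real.sqrt (D ^ 2 / 32) := by
    have k1 := mul_le_mul_of_nonneg_left A7 (by linarith : 0 ≤ 4 * tt - π)
    have k2 : 0 ≤ L + 0.01 * e4 := by linarith
    have k3 := mul_nonneg (sub_nonneg.2 hk) k2
    have k4 := mul_nonneg (sub_nonneg.2 kappa_le) a4
    linarith only [k1, k3, k4, a4]
  have hl := rho_lo
  have hh := rho_hi
  have w1 := mul_nonneg a1 (sub_nonneg.2 hl)
  have w1' := mul_nonneg a1 (sub_nonneg.2 hh)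
  have w2 := mul_nonneg a2 (sub_nonneg.2 hl)
  have w2' := mul_nonneg a2 (sub_nonneg.2 hh)
  have w3 := mul_nonneg a3 (sub_nonneg.2 hl)
  have w3' := mul_nonneg a3 (sub_nonneg.2 hh)
  have w4 := mul_nonneg a4 (sub_nonneg.2 hl)
  have w4' := mul_nonneg a4 (sub_nonneg.2 hh)
  have w5 := mul_nonneg a5 (sub_nonneg.2 hl)
  have w5' := mul_nonneg a5 (sub_nonneg.2 hh)
  have w6 := mul_nonneg a6 (sub_nonneg.2 hl)
  have w6' := mul_nonneg a6 (sub_nonneg.2 hh)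
  linarith only [A1, A2, A3, A4, A5, A6, hvol, hL, w1, w1', w2, w2', w3, w3', w4, w4', w5, w5', w6, w6', a1, a2, a3, a4, a5, a6]

lemma dih_val (θ φ : ℝ) (h0 : 0 ≤ θ) (h1 : θ ≤ π) (h2 : 0 ≤ φ) (h3 : φ ≤ π) (h : cos θ = cos φ) : θ = φ :=
  Real.injOn_cos ⟨h0, h1⟩ ⟨h2, h3⟩ h

/-- the exact value at `S₀` -/
lemma main_eq (m₁ m₂ m₃ m₀ : E3) (D : ℝ) (hD : 0 < D)
    (g : GData m₁ m₂ m₃ m₀ D 0 0 0 0 0 0) :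
    -δoct * (D / 6) +
      (2 * (dih m₁ m₂ + dih m₁ m₃ + dih m₂ m₃ + dih m₀ m₁ + dih m₀ m₂ + dih m₀ m₃) - 4 * π) / 3 = 0 := by
  have hpi := Real.pi_pos
  have s192 : Real.sqrt 192 = 8 * Real.sqrt 3 := by
    rw [show (192 : ℝ) = 8 ^ 2 * 3 by norm_num, Real.sqrt_mul (by norm_num), Real.sqrt_sq (by norm_num)]
  have s144 : Real.sqrt 144 = 12 := by
    rw [show (144 : ℝ) = 12 ^ 2 by norm_num, Real.sqrt_sq (by norm_num)]
  have s256 : Real.sqrt 256 = 16 := by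
    rw [show (256 : ℝ) = 16 ^ 2 by norm_num, Real.sqrt_sq (by norm_num)]
  have h3 := sq3pos
  have fA : ∀ θ, 0 ≤ θ → θ ≤ π → cos θ * Real.sqrt 192 = 8 → θ = tt := by
    intro θ h0 h1 h
    apply dih_val _ _ h0 h1 tt_nonneg (by linarith [tt_le])
    rw [cos_tt, eq_div_iff h3.ne']
    rw [s192] at h
    linarith
  have A1 := fA _ (dih_nonneg m₁ m₂) (dih_le _ _) (by
    have := dih_cos m₁ m₂ D 12 16 8 (by rw [g.f11]; norm_num) (by rw [g.f22]; norm_num) (by rw [g.f12]; norm_num)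
    norm_num at this; exact this)
  have A2 := fA _ (dih_nonneg m₁ m₃) (dih_le _ _) (by
    have := dih_cos m₁ m₃ D 12 16 8 (by rw [g.f11]; norm_num) (by rw [g.f33]; norm_num) (by rw [g.f13]; norm_num)
    norm_num at this; exact this)
  have A3 := fA _ (dih_nonneg m₀ m₂) (dih_le _ _) (by
    have := dih_cos m₀ m₂ D 12 16 8 (by rw [g.f00]; norm_num) (by rw [g.f22]; norm_num) (by rw [g.f02]; norm_num)
    norm_num at this; exact this)
  have A4 := fA _ (dih_nonneg m₀ m₃) (dih_le _ _) (by
    have := dih_cos m₀ m₃ D 12 16 8 (by rw [g.f00]; norm_num) (by rw [g.f33]; norm_num) (by rw [g.f03]; norm_num)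
    norm_num at this; exact this)
  have A5 : dih m₀ m₁ = 2 * tt := by
    apply dih_val _ _ (dih_nonneg _ _) (dih_le _ _) (by linarith [tt_nonneg]) (by linarith [tt_le])
    have := dih_cos m₀ m₁ D 12 12 (-4) (by rw [g.f00]; norm_num) (by rw [g.f11]; norm_num) (by rw [g.f01]; norm_num)
    rw [show (12 : ℝ) * 12 = 144 by norm_num, s144] at this
    rw [cos_two_tt]; linarith
  have A6 : dih m₂ m₃ = π / 2 := by
    apply dih_val _ _ (dih_nonneg _ _) (dih_le _ _) (by linarith) (by linarith)
    have := dih_cos m₂ m₃ D 16 16 0 (by rw [g.f22]; norm_num) (by rw [g.f33]; norm_num) (by rw [g.f23]; norm_num)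
    rw [show (16 : ℝ) * 16 = 256 by norm_num, s256] at this
    rw [Real.cos_pi_div_two]; linarith
  have hd : D ^ 2 / 32 = 1 := by rw [g.det]; norm_num
  rw [A1, A2, A3, A4, A5, A6, neg_mul, delta_vol D hD, hd, Real.sqrt_one]
  ring

lemma gram_of_dist (p₀ p q : E3) : inner ℝ (p - p₀) (q - p₀) = (dist p₀ p ^ 2 + dist p₀ q ^ 2 - dist p q ^ 2) / 2 := by
  rw [real_inner_eq_norm_mul_self_add_norm_mul_self_sub_norm_sub_mul_self_div_two, dist_comm p₀ p, dist_comm p₀ q,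
    dist_eq_norm, dist_eq_norm, dist_eq_norm, sub_sub_sub_cancel_right]
  ring

/-- Appendix: in the `0.001`-neighborhood of `S₀ = S(2√2,2,2,2,2,2)` one has `Γ(S) ≤ 0`,
with equality exactly at `S₀`. -/
theorem compression_nonpos_near_S0 (p₀ p₁ p₂ p₃ : E3)
    (hindep : AffineIndependent ℝ ![p₀, p₁, p₂, p₃])
    (h1 : dist p₀ p₁ ∈ Set.Icc (2 * Real.sqrt 2 - 0.001) (2 * Real.sqrt 2))
    (h2 : dist p₀ p₂ ∈ Set.Icc (2 : ℝ) 2.001) (h3 : dist p₀ p₃ ∈ Set.Icc (2 : ℝ) 2.001)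
    (h4 : dist p₂ p₃ ∈ Set.Icc (2 : ℝ) 2.001) (h5 : dist p₁ p₃ ∈ Set.Icc (2 : ℝ) 2.001)
    (h6 : dist p₁ p₂ ∈ Set.Icc (2 : ℝ) 2.001) :
    Gamma p₀ p₁ p₂ p₃ ≤ 0 ∧
    (Gamma p₀ p₁ p₂ p₃ = 0 ↔
      (dist p₀ p₁ = 2 * Real.sqrt 2 ∧ dist p₀ p₂ = 2 ∧ dist p₀ p₃ = 2 ∧
        dist p₂ p₃ = 2 ∧ dist p₁ p₃ = 2 ∧ dist p₁ p₂ = 2)) := by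
  have hs2 := Real.mul_self_sqrt (show (0 : ℝ) ≤ 2 by norm_num)
  have hs0 : 0 < Real.sqrt 2 := by positivity
  have hs1 : 1.414 ≤ Real.sqrt 2 := by nlinarith only [hs2, hs0]
  have hs3 : Real.sqrt 2 ≤ 1.4143 := by nlinarith only [hs2, hs0]
  obtain ⟨l1, u1⟩ := h1
  obtain ⟨l2, u2⟩ := h2
  obtain ⟨l3, u3⟩ := h3
  obtain ⟨l4, u4⟩ := h4
  obtain ⟨l5, u5⟩ := h5
  obtain ⟨l6, u6⟩ := h6
  obtain ⟨e1, he1⟩ : ∃ e, e = 8 - dist p₀ p₁ ^ 2 := ⟨_, rfl⟩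
  obtain ⟨e2, he2⟩ : ∃ e, e = dist p₀ p₂ ^ 2 - 4 := ⟨_, rfl⟩
  obtain ⟨e3, he3⟩ : ∃ e, e = dist p₀ p₃ ^ 2 - 4 := ⟨_, rfl⟩
  obtain ⟨e4, he4⟩ : ∃ e, e = dist p₂ p₃ ^ 2 - 4 := ⟨_, rfl⟩
  obtain ⟨e5, he5⟩ : ∃ e, e = dist p₁ p₃ ^ 2 - 4 := ⟨_, rfl⟩
  obtain ⟨e6, he6⟩ : ∃ e, e = dist p₁ p₂ ^ 2 - 4 := ⟨_, rfl⟩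
  have lo : ∀ x : ℝ, 2 ≤ x → 0 ≤ x ^ 2 - 4 := fun x h => by nlinarith only [h]
  have hi : ∀ x : ℝ, 2 ≤ x → x ≤ 2.001 → x ^ 2 - 4 ≤ 0.004001 := fun x h h' => by nlinarith only [h, h']
  have B : Box e1 e2 e3 e4 e5 e6 := by
    refine ⟨?_, he2 ▸ lo _ l2, he3 ▸ lo _ l3, he4 ▸ lo _ l4, he5 ▸ lo _ l5, he6 ▸ lo _ l6, ?_,
      he2 ▸ hi _ l2 u2, he3 ▸ hi _ l3 u3, he4 ▸ hi _ l4 u4, he5 ▸ hi _ l5 u5, he6 ▸ hi _ l6 u6⟩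
    · have := mul_self_le_mul_self dist_nonneg u1
      rw [he1]; nlinarith only [this, hs2]
    · have := mul_self_le_mul_self (by linarith) l1
      rw [he1]; nlinarith only [this, hs2, hs3]
  have g11 : inner ℝ (p₁ - p₀) (p₁ - p₀) = 8 - e1 := by rw [gram_of_dist, dist_self, he1]; ring
  have g22 : inner ℝ (p₂ - p₀) (p₂ - p₀) = 4 + e2 := by rw [gram_of_dist, dist_self, he2]; ring
  have g33 : inner ℝ (p₃ - p₀) (p₃ - p₀) = 4 + e3 := by rw [gram_of_dist, dist_self, he3]; ring
  have g12 : inner ℝ (p₁ - p₀) (p₂ - p₀) = (8 - e1 + e2 - e6) / 2 := by rw [gram_of_dist, he1, he2, he6]; ring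
  have g13 : inner ℝ (p₁ - p₀) (p₃ - p₀) = (8 - e1 + e3 - e5) / 2 := by rw [gram_of_dist, he1, he3, he5]; ring
  have g23 : inner ℝ (p₂ - p₀) (p₃ - p₀) = (4 + e2 + e3 - e4) / 2 := by rw [gram_of_dist, he2, he3, he4]; ring
  obtain ⟨m₁, m₂, m₃, D, d⟩ := exists_dual (p₁ - p₀) (p₂ - p₀) (p₃ - p₀) (by
    rw [g11, g22, g33, g12, g13, g23]
    have := (vol_bd B _ rfl).2
    linarith only [this])
  have gd := gdata _ _ _ _ _ _ _ _ e1 e2 e3 e4 e5 e6 d rfl g11 g22 g33 g12 g13 g23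
  have hle := (gamma_le p₀ p₁ p₂ p₃ m₁ m₂ m₃ _ D d rfl).trans (main_bd _ _ _ _ D e1 e2 e3 e4 e5 e6 d.hD B gd)
  obtain ⟨a1, a2, a3, a4, a5, a6, -, -, -, -, -, -⟩ := B
  have zero : ∀ x : ℝ, 2 ≤ x → x ^ 2 - 4 = 0 → x = 2 := fun x h h' => by nlinarith only [h, h']
  refine ⟨by linarith only [hle, a1, a2, a3, a4, a5, a6], ?_, ?_⟩
  · intro h
    rw [h] at hle
    refine ⟨?_, zero _ l2 ?_, zero _ l3 ?_, zero _ l4 ?_, zero _ l5 ?_, zero _ l6 ?_⟩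
    · have z1 : e1 = 0 := by linarith only [hle, a1, a2, a3, a4, a5, a6]
      rw [z1] at he1
      have : (dist p₀ p₁ - 2 * Real.sqrt 2) * (dist p₀ p₁ + 2 * Real.sqrt 2) = 0 := by
        linear_combination he1 - 4 * hs2
      rcases mul_eq_zero.1 this with h | h
      · linarith only [h]
      · linarith only [h, hs0, dist_nonneg (x := p₀) (y := p₁)]
    · linarith only [hle, a1, a2, a3, a4, a5, a6, he2]
    · linarith only [hle, a1, a2, a3, a4, a5, a6, he3]
    · linarith only [hle, a1, a2, a3, a4, a5, a6, he4]
    · linarith only [hle, a1, a2, a3, a4, a5, a6, he5]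
    · linarith only [hle, a1, a2, a3, a4, a5, a6, he6]
  · rintro ⟨q1, q2, q3, q4, q5, q6⟩
    rw [q1] at he1
    rw [q2] at he2
    rw [q3] at he3
    rw [q4] at he4
    rw [q5] at he5
    rw [q6] at he6
    obtain rfl : e1 = 0 := by rw [he1]; linear_combination -4 * hs2
    obtain rfl : e2 = 0 := by rw [he2]; norm_num
    obtain rfl : e3 = 0 := by rw [he3]; norm_num
    obtain rfl : e4 = 0 := by rw [he4]; norm_num
    obtain rfl : e5 = 0 := by rw [he5]; norm_num
    obtain rfl : e6 = 0 := by rw [he6]; norm_num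
    rw [gamma_eq p₀ p₁ p₂ p₃ m₁ m₂ m₃ _ D d rfl (by linarith only [q1, hs1]) l2 l3 l4 l5 l6
      (by rw [g11]; norm_num) (by rw [g22]; norm_num) (by rw [g33]; norm_num) (by rw [g12]; norm_num)
      (by rw [g13]; norm_num) (by rw [g23]; norm_num)]
    exact main_eq _ _ _ _ D d.hD gd
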